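/- arXiv:0803.0134 — 2 statements merged into one kernel-verified Lean document; each statement's English description precedes it below -/
import Mathlib

section
/- Let G₀ be a connected cubic pseudo-graph, and let G be obtained from G₀ by subdividing each edge e exactly k(e) times, where k(e) ≥ 1 for every loop e and k(e) ≥ 2 for every non-loop edge e. Then ν₂(G) ≥ (5/6)·|V(G)|. -/
structure Multigraph where
  V : Type
  E : Type
  fintypeV : Fintype V
  decEqV : DecidableEq V
  fintypeE : Fintype E
  decEqE : DecidableEq E
  ends : E → Sym2 V

attribute [instance] Multigraph.fintypeV Multigraph.decEqV Multigraph.fintypeE Multigraph.decEqE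

namespace Multigraph

/-- `e` is a loop if both of its endpoints coincide. -/
def IsLoop (G : Multigraph) (e : G.E) : Prop := (G.ends e).IsDiag

/-- A loopless multigraph. -/
def Loopless (G : Multigraph) : Prop := ∀ e, ¬ G.IsLoop e

/-- Degree of a vertex: loops count twice. -/
def deg (G : Multigraph) (v : G.V) : ℕ :=
  ∑ e : G.E, (if G.ends e = Sym2.diag v then 2 else if v ∈ G.ends e then 1 else 0)

/-- Adjacency via some edge. -/
def Adj (G : Multigraph) (u v : G.V) : Prop := ∃ e, G.ends e = s(u, v)

/-- Connectivity. -/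
def Connected (G : Multigraph) : Prop := ∀ u v : G.V, Relation.ReflTransGen G.Adj u v

/-- A matching: a set of non-loop edges no two of which share an endpoint. -/
def IsMatching (G : Multigraph) (M : Finset G.E) : Prop :=
  (∀ e ∈ M, ¬ G.IsLoop e) ∧
  ∀ e ∈ M, ∀ f ∈ M, e ≠ f → ∀ v : G.V, v ∈ G.ends e → v ∉ G.ends f

/-- A maximum matching. -/
def IsMaximumMatching (G : Multigraph) (M : Finset G.E) : Prop :=
  G.IsMatching M ∧ ∀ M' : Finset G.E, G.IsMatching M' → M'.card ≤ M.card

/-- `v` is saturated by `M`. -/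
def Saturated (G : Multigraph) (M : Finset G.E) (v : G.V) : Prop :=
  ∃ e ∈ M, v ∈ G.ends e

/-- Size of a maximum matching. -/
noncomputable def nu1 (G : Multigraph) : ℕ :=
  sSup {m | ∃ M : Finset G.E, G.IsMatching M ∧ M.card = m}

/-- Max number of edges coverable by two disjoint matchings. -/
noncomputable def nu2 (G : Multigraph) : ℕ :=
  sSup {m | ∃ H H' : Finset G.E, G.IsMatching H ∧ G.IsMatching H' ∧
    Disjoint H H' ∧ H.card + H'.card = m}

/-- Max number of edges coverable by three pairwise disjoint matchings. -/
noncomputable def nu3 (G : Multigraph) : ℕ :=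
  sSup {m | ∃ H₁ H₂ H₃ : Finset G.E, G.IsMatching H₁ ∧ G.IsMatching H₂ ∧ G.IsMatching H₃ ∧
    Disjoint H₁ H₂ ∧ Disjoint H₁ H₃ ∧ Disjoint H₂ H₃ ∧ H₁.card + H₂.card + H₃.card = m}

/-- Subdividing the edge `e`, with endpoints `u`, `v`, once: replace it by a path `u - w - v`
through a new vertex `w`. -/
def subdivideOnce (G : Multigraph) (e : G.E) (u v : G.V) : Multigraph where
  V := G.V ⊕ Unit
  E := {f : G.E // f ≠ e} ⊕ Bool
  fintypeV := inferInstance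
  decEqV := inferInstance
  fintypeE := inferInstance
  decEqE := inferInstance
  ends := fun f =>
    match f with
    | Sum.inl ⟨f, _⟩ => (G.ends f).map Sum.inl
    | Sum.inr true => s(Sum.inl u, Sum.inr ())
    | Sum.inr false => s(Sum.inl v, Sum.inr ())

/-- Subdividing every edge `e` exactly `k e` times, where `fst`/`snd` pick out the endpoints
of every edge. The edge `e` is replaced by the path
`fst e, (e,0), (e,1), …, (e, k e - 1), snd e` of length `k e + 1`. -/
def subdivide (G : Multigraph) (fst snd : G.E → G.V) (k : G.E → ℕ) : Multigraph where
  V := G.V ⊕ (Σ e : G.E, Fin (k e))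
  E := Σ e : G.E, Fin (k e + 1)
  fintypeV := inferInstance
  decEqV := inferInstance
  fintypeE := inferInstance
  decEqE := inferInstance
  ends := fun f =>
    s( if h : f.2.val = 0 then Sum.inl (fst f.1)
       else Sum.inr ⟨f.1, ⟨f.2.val - 1, by omega⟩⟩,
       if h : f.2.val = k f.1 then Sum.inl (snd f.1)
       else Sum.inr ⟨f.1, ⟨f.2.val, by have := f.2.isLt; omega⟩⟩ )

/-!
Properly 2-colouring a subset of the edges amounts to choosing two disjoint matchings. If the
edges along each subdivided edge alternate in colour, and both colours occur at every vertex of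
the original graph, then each original vertex keeps one edge of either colour, and only
`deg v - 2` edges per original vertex have to be discarded.

Such an alternating colouring is one bit per original edge subject to a not-all-equal constraint
at every vertex. Because all degrees are at least 3, any nonempty set `W` of vertices meets at
least `3/2 * |W| > |W|` edges, and under this surplus condition the constraints are satisfiable:
this is Lovász's theorem on 2-colourings of hypergraphs, with signs. Hall's theorem assigns to the
vertices distinct edges of their own. By the surplus, every nonempty set of vertices still waiting
for their own edge to be coloured contains one that already has a coloured edge; colouring the
edge it owns with the other colour (up to sign) satisfies this vertex and disturbs no earlier one.
-/

section

open Finset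

section NotAllEqual

variable {ι κ : Type*}

/-- The literals `c e`, negated where `s e` holds, take both truth values on `F`: the assignment `c`
satisfies the not-all-equal clause on `F` with signs `s`. -/
def IsBicolored (c s : κ → Bool) (F : Finset κ) : Prop :=
  ∀ b, ∃ e ∈ F, (c e ^^ s e) = b

variable [DecidableEq κ] {A : ι → Finset κ}

lemma exists_erase_isBicolored [DecidableEq ι] {s : ι → κ → Bool} {own : ι → κ}
    (hown : own.Injective) (hmem : ∀ v, own v ∈ A v) {W : Finset ι} (hW : #W < #(W.biUnion A))
    {c : κ → Bool}
    (hc : ∀ v ∉ W, IsBicolored c (s v) (A v \ W.image own)) :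
    ∃ w ∈ W, ∃ c' : κ → Bool,
      ∀ v ∉ W.erase w, IsBicolored c' (s v) (A v \ (W.erase w).image own) := by
  obtain ⟨e, he, heW⟩ := exists_mem_notMem_of_card_lt_card (card_image_le.trans_lt hW)
  obtain ⟨w, hw, hew⟩ := mem_biUnion.1 he
  have keep {f : κ} (hf : f ∉ W.image own) : f ∉ (W.erase w).image own :=
    fun h => hf (image_subset_image (erase_subset w W) h)
  have ne_own {f : κ} (hf : f ∉ W.image own) : f ≠ own w :=
    fun h => hf (h ▸ mem_image_of_mem own hw)
  have own_notMem : own w ∉ (W.erase w).image own := by simp [hown.eq_iff]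
  refine ⟨w, hw, Function.update c (own w) (!(c e ^^ s w e) ^^ s w (own w)), fun v hv b => ?_⟩
  by_cases hvw : v = w
  · subst hvw
    by_cases hb : (c e ^^ s v e) = b
    · exact ⟨e, mem_sdiff.2 ⟨hew, keep heW⟩, by rwa [Function.update_of_ne (ne_own heW)]⟩
    · refine ⟨own v, mem_sdiff.2 ⟨hmem v, own_notMem⟩, ?_⟩
      rw [Function.update_self, Bool.xor_assoc, Bool.xor_self, Bool.xor_false]
      exact Bool.not_eq.2 hb
  · obtain ⟨f, hf, hfb⟩ := hc v (fun h => hv (mem_erase.2 ⟨hvw, h⟩)) b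
    obtain ⟨hfA, hfW⟩ := mem_sdiff.1 hf
    exact ⟨f, mem_sdiff.2 ⟨hfA, keep hfW⟩, by rwa [Function.update_of_ne (ne_own hfW)]⟩

theorem exists_forall_isBicolored [Finite ι]
    (hA : ∀ W : Finset ι, W.Nonempty → #W < #(W.biUnion A)) (s : ι → κ → Bool) :
    ∃ c : κ → Bool, ∀ v, IsBicolored c (s v) (A v) := by
  classical
  have := Fintype.ofFinite ι
  have hall : ∀ W : Finset ι, #W ≤ #(W.biUnion A) := fun W => by
    obtain rfl | hW := W.eq_empty_or_nonempty
    · simp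
    · exact (hA W hW).le
  obtain ⟨own, hown, hmem⟩ := (all_card_le_biUnion_card_iff_exists_injective A).1 hall
  obtain ⟨W, ⟨c, hc⟩, hmin⟩ := exists_minimal_of_wellFoundedLT
    (fun W : Finset ι => ∃ c : κ → Bool, ∀ v ∉ W, IsBicolored c (s v) (A v \ W.image own))
    ⟨univ, fun _ => false, by simp⟩
  obtain rfl | hW := W.eq_empty_or_nonempty
  · exact ⟨c, by simpa using hc⟩
  · obtain ⟨w, hw, hc'⟩ := exists_erase_isBicolored hown hmem (hA W hW) hc
    exact absurd (hmin hc' (erase_subset w W) hw) (notMem_erase w W)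

end NotAllEqual

section Degree

variable (G : Multigraph)

/-- The edges at the vertex `v`, a loop being listed once. -/
def incidentEdges (v : G.V) : Finset G.E := {e | v ∈ G.ends e}

variable {G}

@[simp]
lemma mem_incidentEdges {v : G.V} {e : G.E} : e ∈ G.incidentEdges v ↔ v ∈ G.ends e := by
  simp [incidentEdges]

lemma deg_eq_card_add_card {fst snd : G.E → G.V} (hends : ∀ e, G.ends e = s(fst e, snd e))
    (v : G.V) : G.deg v = #{e | fst e = v} + #{e | snd e = v} := by
  rw [deg, card_filter, card_filter, ← sum_add_distrib]
  refine sum_congr rfl fun e _ => ?_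
  rw [hends]
  by_cases hu : fst e = v <;> by_cases hv : snd e = v <;>
    simp [Sym2.diag, hu, hv, eq_comm (a := v)]

lemma sum_deg_eq_card_add_card {fst snd : G.E → G.V} (hends : ∀ e, G.ends e = s(fst e, snd e))
    (W : Finset G.V) : ∑ v ∈ W, G.deg v = #{e | fst e ∈ W} + #{e | snd e ∈ W} := by
  simp only [deg_eq_card_add_card hends, sum_add_distrib, sum_card_fiberwise_eq_card_filter]

variable (G) in
lemma exists_ends_eq : ∃ fst snd : G.E → G.V, ∀ e, G.ends e = s(fst e, snd e) := by
  choose fst snd hends using fun e => Sym2.exists.1 ⟨G.ends e, rfl⟩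
  exact ⟨fst, snd, hends⟩

variable (G) in
lemma sum_deg_eq_two_mul_card : ∑ v, G.deg v = 2 * Fintype.card G.E := by
  obtain ⟨fst, snd, hends⟩ := G.exists_ends_eq
  simp [sum_deg_eq_card_add_card hends, two_mul]

lemma sum_deg_le_two_mul_card_biUnion (W : Finset G.V) :
    ∑ v ∈ W, G.deg v ≤ 2 * #(W.biUnion G.incidentEdges) := by
  obtain ⟨fst, snd, hends⟩ := G.exists_ends_eq
  rw [sum_deg_eq_card_add_card hends, two_mul]
  gcongr <;>
  · intro e he
    simp only [mem_filter_univ] at he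
    exact mem_biUnion.2 ⟨_, he, by simp [hends]⟩

lemma card_lt_card_biUnion_incidentEdges (hdeg : ∀ v, 3 ≤ G.deg v) {W : Finset G.V}
    (hW : W.Nonempty) : #W < #(W.biUnion G.incidentEdges) := by
  have hlower : #W * 3 ≤ ∑ v ∈ W, G.deg v := card_nsmul_le_sum W G.deg 3 fun v _ => hdeg v
  have hupper := sum_deg_le_two_mul_card_biUnion W
  have hpos := hW.card_pos
  lia

lemma card_loops_le_card_of_deg_le_three {fst snd : G.E → G.V}
    (hends : ∀ e, G.ends e = s(fst e, snd e)) (hdeg : ∀ v, G.deg v ≤ 3) :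
    #{e | fst e = snd e} ≤ Fintype.card G.V := by
  rw [← card_univ, ← one_mul #univ]
  refine card_le_mul_card_image_of_maps_to (f := fst) (fun _ _ => mem_univ _) 1 fun v _ => ?_
  have hfst : #{e ∈ ({e | fst e = snd e} : Finset G.E) | fst e = v} ≤ #{e | fst e = v} :=
    card_le_card fun e => by simp
  have hsnd : #{e ∈ ({e | fst e = snd e} : Finset G.E) | fst e = v} ≤ #{e | snd e = v} :=
    card_le_card fun e => by simp +contextual [eq_comm]
  have hv := hdeg v
  rw [deg_eq_card_add_card hends] at hv
  lia

end Degree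

section Matchings

variable {G : Multigraph}

lemma card_le_nu2 {K : Finset G.E} (hK : ∀ x ∈ K, ¬ G.IsLoop x) (c : G.E → Bool)
    (hc : ∀ v, Set.InjOn c {x ∈ K | v ∈ G.ends x}) :
    #K ≤ G.nu2 := by
  have hmatching (b : Bool) : G.IsMatching {x ∈ K | c x = b} := by
    simp only [IsMatching, mem_filter]
    exact ⟨fun x hx => hK x hx.1, fun x hx y hy hxy v hvx hvy =>
      hxy (hc v ⟨hx.1, hvx⟩ ⟨hy.1, hvy⟩ (hx.2.trans hy.2.symm))⟩
  refine le_csSup ⟨Fintype.card G.E + Fintype.card G.E, ?_⟩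
    ⟨_, _, hmatching true, hmatching false, ?_, ?_⟩
  · rintro m ⟨H, H', -, -, -, rfl⟩
    exact Nat.add_le_add (card_le_univ H) (card_le_univ H')
  · exact disjoint_filter.2 fun x _ hx => by simp [hx]
  · simpa using card_filter_add_card_filter_not (s := K) (fun x => c x = true)

lemma exists_card_add_two_eq_injOn_sdiff {κ : Type*} [DecidableEq κ] {F : Finset κ} {c : κ → Bool}
    (hF : ∀ b, ∃ x ∈ F, c x = b) : ∃ D : Finset κ, #D + 2 = #F ∧ Set.InjOn c ↑(F \ D) := by
  choose x hxF hcx using hF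
  have hne : x false ≠ x true := fun h => by simpa [hcx] using congrArg c h
  have hsub : {x false, x true} ⊆ F := by simp [insert_subset_iff, hxF]
  refine ⟨F \ {x false, x true}, ?_, ?_⟩
  · rw [← card_pair hne, card_sdiff_add_card_eq_card hsub]
  · rw [Finset.sdiff_sdiff_eq_self hsub]
    simp [Set.InjOn, hcx]

theorem card_add_two_mul_card_le_nu2_add_sum (hG : G.Loopless) (S : Finset G.V) (c : G.E → Bool)
    (hproper : ∀ v ∉ S, Set.InjOn c (G.incidentEdges v))
    (hboth : ∀ v ∈ S, ∀ b, ∃ x ∈ G.incidentEdges v, c x = b) :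
    Fintype.card G.E + 2 * #S ≤ G.nu2 + ∑ v ∈ S, #(G.incidentEdges v) := by
  choose! D hD hinj using fun v hv => exists_card_add_two_eq_injOn_sdiff (hboth v hv)
  have hnu2 : #(S.biUnion D)ᶜ ≤ G.nu2 := by
    refine card_le_nu2 (fun x _ => hG x) c fun v x hx y hy hxy => ?_
    simp only [Set.mem_ofPred_eq, mem_compl, mem_biUnion, not_exists, not_and] at hx hy
    by_cases hv : v ∈ S
    · exact hinj v hv (by simpa using ⟨hx.2, hx.1 v hv⟩) (by simpa using ⟨hy.2, hy.1 v hv⟩) hxy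
    · exact hproper v hv (by simpa using hx.2) (by simpa using hy.2) hxy
  calc Fintype.card G.E + 2 * #S
      = #(S.biUnion D)ᶜ + (#(S.biUnion D) + 2 * #S) := by rw [← add_assoc, card_compl_add_card]
    _ ≤ G.nu2 + (∑ v ∈ S, #(D v) + 2 * #S) := by gcongr; exact card_biUnion_le
    _ = G.nu2 + ∑ v ∈ S, #(G.incidentEdges v) := by
        rw [← sum_congr rfl hD, sum_add_distrib, sum_const, smul_eq_mul, mul_comm]

end Matchings

section Subdivision

variable {G₀ : Multigraph} {fst snd : G₀.E → G₀.V} {k : G₀.E → ℕ}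

lemma card_V_subdivide :
    Fintype.card (G₀.subdivide fst snd k).V = Fintype.card G₀.V + ∑ e, k e := by
  change Fintype.card (G₀.V ⊕ (Σ e, Fin (k e))) = _
  simp

lemma card_E_subdivide :
    Fintype.card (G₀.subdivide fst snd k).E = ∑ e, k e + Fintype.card G₀.E := by
  change Fintype.card (Σ e, Fin (k e + 1)) = _
  simp [sum_add_distrib]

/-- The vertices of `G₀`, as vertices of its subdivision. -/
def branchVertex : G₀.V ↪ (G₀.subdivide fst snd k).V := Function.Embedding.inl

/-- The subdivision vertices; `⟨e, j⟩` is the `j`-th one on the edge `e`, counted from `0` and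
starting at `fst e`. -/
def innerVertex (w : Σ e, Fin (k e)) : (G₀.subdivide fst snd k).V := Sum.inr w

lemma branchVertex_mem_ends {v : G₀.V} {x : (G₀.subdivide fst snd k).E} :
    branchVertex v ∈ (G₀.subdivide fst snd k).ends x ↔
      x.2.val = 0 ∧ fst x.1 = v ∨ x.2.val = k x.1 ∧ snd x.1 = v := by
  refine Sym2.mem_iff.trans (or_congr ?_ ?_) <;>
  · change (Sum.inl v : G₀.V ⊕ Σ e, Fin (k e)) = _ ↔ _
    split_ifs with h <;> simp [h, eq_comm (a := v)]

lemma innerVertex_mem_ends {w : Σ e, Fin (k e)} {x : (G₀.subdivide fst snd k).E} :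
    innerVertex w ∈ (G₀.subdivide fst snd k).ends x ↔
      w.1 = x.1 ∧ (x.2.val = w.2.val + 1 ∨ x.2.val = w.2.val) := by
  obtain ⟨e, i⟩ := x
  obtain ⟨f, j⟩ := w
  refine Sym2.mem_iff.trans (Iff.trans (or_congr ?_ ?_) and_or_left.symm) <;>
  · change (Sum.inr ⟨f, j⟩ : G₀.V ⊕ Σ e, Fin (k e)) = _ ↔ _
    by_cases hfe : f = e
    · subst hfe
      split_ifs <;> simp [Fin.ext_iff] <;> lia
    · split_ifs <;> simp [hfe]

lemma loopless_subdivide (hk : ∀ e, fst e = snd e → 1 ≤ k e) :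
    (G₀.subdivide fst snd k).Loopless := by
  rintro ⟨e, i⟩ h
  simp only [IsLoop, subdivide, Sym2.mk_isDiag_iff] at h
  split_ifs at h with h0 hlast hlast
  · have := hk e (Sum.inl.inj h)
    lia
  · have := Sum.inr.inj h
    simp only [Sigma.mk.injEq, heq_eq_eq, true_and, Fin.mk.injEq] at this
    lia

lemma card_incidentEdges_subdivide_le (hends : ∀ e, G₀.ends e = s(fst e, snd e)) (v : G₀.V) :
    #((G₀.subdivide fst snd k).incidentEdges (branchVertex v)) ≤ G₀.deg v := by
  let first (e : G₀.E) : (G₀.subdivide fst snd k).E := ⟨e, 0⟩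
  let last (e : G₀.E) : (G₀.subdivide fst snd k).E := ⟨e, Fin.last (k e)⟩
  rw [deg_eq_card_add_card hends]
  calc _ ≤ #(image first {e | fst e = v} ∪ image last {e | snd e = v}) := by
        refine card_le_card fun x hx => mem_union.2 ?_
        obtain ⟨e, i⟩ := x
        rcases branchVertex_mem_ends.1 (mem_incidentEdges.1 hx) with ⟨hi, he⟩ | ⟨hi, he⟩
        · obtain rfl : i = 0 := Fin.ext hi
          exact Or.inl (mem_image_of_mem first (by simpa using he))
        · obtain rfl : i = Fin.last (k e) := Fin.ext hi
          exact Or.inr (mem_image_of_mem last (by simpa using he))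
    _ ≤ _ := (card_union_le _ _).trans (add_le_add card_image_le card_image_le)

/-- The colouring of the subdivided graph that alternates along the path replacing `e`, starting
with the colour `c e` at `fst e`. -/
def alternatingColoring (fst snd : G₀.E → G₀.V) (k : G₀.E → ℕ) (c : G₀.E → Bool)
    (x : (G₀.subdivide fst snd k).E) : Bool :=
  c x.1 ^^ x.2.val.bodd

lemma injOn_alternatingColoring_incidentEdges (c : G₀.E → Bool) (w : Σ e, Fin (k e)) :
    Set.InjOn (alternatingColoring fst snd k c)
      ((G₀.subdivide fst snd k).incidentEdges (innerVertex w)) := by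
  rintro ⟨e, i⟩ hx ⟨f, j⟩ hy hxy
  obtain ⟨rfl, hi⟩ := innerVertex_mem_ends.1 (mem_incidentEdges.1 hx)
  obtain ⟨rfl, hj⟩ := innerVertex_mem_ends.1 (mem_incidentEdges.1 hy)
  have hparity : i.val.bodd = j.val.bodd := by simpa [alternatingColoring] using hxy
  suffices i = j by rw [this]
  apply Fin.ext
  rcases hi with hi | hi <;> rcases hj with hj | hj <;> simp_all

lemma exists_alternatingColoring_bicolored (hends : ∀ e, G₀.ends e = s(fst e, snd e))
    (hdeg : ∀ v, 3 ≤ G₀.deg v) :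
    ∃ c : G₀.E → Bool, ∀ v b, ∃ x ∈ (G₀.subdivide fst snd k).incidentEdges (branchVertex v),
      alternatingColoring fst snd k c x = b := by
  obtain ⟨c, hc⟩ := exists_forall_isBicolored
    (fun _ hW => card_lt_card_biUnion_incidentEdges hdeg hW)
    (fun v e => if fst e = v then false else (k e).bodd)
  refine ⟨c, fun v b => ?_⟩
  obtain ⟨e, he, rfl⟩ := hc v b
  rw [mem_incidentEdges, hends, Sym2.mem_iff] at he
  by_cases hv : fst e = v
  · exact ⟨⟨e, 0⟩, mem_incidentEdges.2 (branchVertex_mem_ends.2 (.inl ⟨rfl, hv⟩)),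
      by simp [alternatingColoring, hv]⟩
  · have hv' : snd e = v := (he.resolve_left (Ne.symm hv)).symm
    exact ⟨⟨e, Fin.last (k e)⟩, mem_incidentEdges.2 (branchVertex_mem_ends.2 (.inr ⟨rfl, hv'⟩)),
      by simp [alternatingColoring, hv]⟩

theorem sum_add_two_mul_card_le_nu2_subdivide_add_card
    (hends : ∀ e, G₀.ends e = s(fst e, snd e)) (hdeg : ∀ v, 3 ≤ G₀.deg v)
    (hk : ∀ e, fst e = snd e → 1 ≤ k e) :
    ∑ e, k e + 2 * Fintype.card G₀.V ≤ (G₀.subdivide fst snd k).nu2 + Fintype.card G₀.E := by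
  obtain ⟨c, hc⟩ := exists_alternatingColoring_bicolored (k := k) hends hdeg
  have hproper : ∀ v ∉ univ.map branchVertex,
      Set.InjOn (alternatingColoring fst snd k c) ((G₀.subdivide fst snd k).incidentEdges v) := by
    rintro (v | w) hv
    · exact absurd (mem_map_of_mem branchVertex (mem_univ v)) hv
    · exact injOn_alternatingColoring_incidentEdges c w
  have hcount := card_add_two_mul_card_le_nu2_add_sum (loopless_subdivide hk)
    (univ.map branchVertex) (alternatingColoring fst snd k c) hproper (by simpa using hc)
  rw [card_E_subdivide, card_map, card_univ, sum_map] at hcount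
  have hsum :
      ∑ v, #((G₀.subdivide fst snd k).incidentEdges (branchVertex v)) ≤ 2 * Fintype.card G₀.E :=
    (sum_le_sum fun v _ => card_incidentEdges_subdivide_le hends v).trans_eq
      G₀.sum_deg_eq_two_mul_card
  lia

lemma two_mul_card_le_sum_add_card_loops (hloop : ∀ e, fst e = snd e → 1 ≤ k e)
    (hnonloop : ∀ e, fst e ≠ snd e → 2 ≤ k e) :
    2 * Fintype.card G₀.E ≤ ∑ e, k e + #{e | fst e = snd e} := by
  rw [card_filter, ← sum_add_distrib, mul_comm, ← smul_eq_mul, ← card_univ]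
  refine card_nsmul_le_sum _ _ _ fun e _ => ?_
  split_ifs with he
  · exact Nat.succ_le_succ (hloop e he)
  · exact hnonloop e he

end Subdivision

end

theorem nu2_subdivide_ge_five_sixths_general
    (G₀ : Multigraph) (fst snd : G₀.E → G₀.V)
    (hends : ∀ e : G₀.E, G₀.ends e = s(fst e, snd e))
    (hcubic : ∀ v : G₀.V, G₀.deg v = 3) (k : G₀.E → ℕ)
    (hkloop : ∀ e : G₀.E, G₀.IsLoop e → 1 ≤ k e)
    (hknonloop : ∀ e : G₀.E, ¬ G₀.IsLoop e → 2 ≤ k e) :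
    6 * (G₀.subdivide fst snd k).nu2 ≥ 5 * Fintype.card (G₀.subdivide fst snd k).V := by
  simp only [IsLoop, hends, Sym2.mk_isDiag_iff] at hkloop hknonloop
  have hnu2 := sum_add_two_mul_card_le_nu2_subdivide_add_card hends (fun v => (hcubic v).ge) hkloop
  have hdeg : 3 * Fintype.card G₀.V = 2 * Fintype.card G₀.E := by
    simpa [hcubic, mul_comm] using G₀.sum_deg_eq_two_mul_card
  have hloops := card_loops_le_card_of_deg_le_three hends fun v => (hcubic v).le
  have hsum := two_mul_card_le_sum_add_card_loops hkloop hknonloop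
  rw [card_V_subdivide]
  lia

/-- If G is obtained from a connected cubic pseudo-graph G₀ by subdividing
each edge e exactly k(e) times, with k(e) ≥ 1 for loops and k(e) ≥ 2 for non-loop edges,
then ν₂(G) ≥ (5/6)·|V(G)|. -/
theorem nu2_subdivide_ge_five_sixths
    (G₀ : Multigraph) (fst snd : G₀.E → G₀.V)
    (hends : ∀ e : G₀.E, G₀.ends e = s(fst e, snd e))
    (hconn : G₀.Connected) (hcubic : ∀ v : G₀.V, G₀.deg v = 3)
    (k : G₀.E → ℕ)
    (hkloop : ∀ e : G₀.E, G₀.IsLoop e → 1 ≤ k e)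
    (hknonloop : ∀ e : G₀.E, ¬ G₀.IsLoop e → 2 ≤ k e) :
    6 * (G₀.subdivide fst snd k).nu2 ≥ 5 * Fintype.card (G₀.subdivide fst snd k).V :=
  nu2_subdivide_ge_five_sixths_general G₀ fst snd hends hcubic k hkloop hknonloop

end Multigraph
end

section
/- Every cubic graph G satisfies ν₂(G) ≥ (4/5)·|V(G)|, i.e., at least (4/5)|V(G)| edges of G can be covered by two disjoint matchings. -/
namespace Multigraph

/-!
Colour as many edges as possible properly with two colours, subject to colouring every *fat* edge
(one of two parallel edges that lie in triangles), and then minimize the number `i` of vertices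
without coloured edges. The coloured edges form cycles and paths. By Kempe exchanges, an uncoloured
edge between two vertices that each miss a colour joins the two ends of one path, which it closes
into an odd cycle. Let `k` be the number of ends of such paths, `o` the number of ends of other
paths of positive length (open ends), and `f` the number of vertices on two coloured
edges, so that the number of coloured edges is `s = (o + k + 2 * f) / 2`.

* Uncoloured edges join every isolated vertex to three, and every open end to two, of the `f`
  vertices, each of which has only one uncoloured edge.
* Rotating the uncoloured edge around an odd cycle shows that uncoloured edges leaving the cycle
  avoid all other path ends. So the `3 * i + 2 * o` vertices above are not on the odd cycles, and
  each cycle brings three further vertices: interior vertices of its path or, when it is a triangle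
  with a single interior vertex, outer neighbours of its two ends.
* An isolated vertex has an uncoloured edge to a vertex `x` off the fat edges. Moving the colour of
  an edge `xy` to it shows that `y` is an open end, so `2 * i ≤ o`.

Hence `f ≥ 3 * i + 2 * o + 3 * k / 2`, and `5 * s - 4 * (i + o + k + f) ≥ o / 2 - i ≥ 0`.
-/

open Finset

section Star

variable {G : Multigraph}

/-- The set of edges incident to the vertex `v`. -/
def star (G : Multigraph) (v : G.V) : Finset G.E := {e | v ∈ G.ends e}

@[simp]
theorem mem_star {v : G.V} {e : G.E} : e ∈ G.star v ↔ v ∈ G.ends e := by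
  simp [star]

theorem Loopless.ne_of_ends_eq (hl : G.Loopless) {e : G.E} {u v : G.V}
    (he : G.ends e = s(u, v)) : u ≠ v := by
  rintro rfl
  exact hl e (by simp [IsLoop, he])

theorem Loopless.card_star (hl : G.Loopless) (v : G.V) : #(G.star v) = G.deg v := by
  rw [star, card_filter, deg]
  refine sum_congr rfl fun e _ ↦ ?_
  refine (if_neg fun h ↦ hl e ?_).symm
  rw [IsLoop, h]
  exact Sym2.diag_isDiag v

end Star

/-- A partial edge colouring with two colours, where `none` stands for uncoloured. The colour
classes of a proper one are two disjoint matchings. -/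
abbrev Coloring (G : Multigraph) := G.E → Option Bool

namespace Coloring

variable {G : Multigraph}

section Basic

/-- Edges sharing an endpoint have different colours, unless one of them is uncoloured. -/
def IsProper (c : G.Coloring) : Prop :=
  ∀ ⦃v e f a⦄, v ∈ G.ends e → v ∈ G.ends f → c e = some a → c f = some a → e = f

/-- The set of coloured edges. -/
def support (c : G.Coloring) : Finset G.E := {e | c e ≠ none}

/-- The set of coloured edges at `v`. -/
def coloredStar (c : G.Coloring) (v : G.V) : Finset G.E := G.star v ∩ c.support

/-- The set of uncoloured edges at `v`. -/
def uncoloredStar (c : G.Coloring) (v : G.V) : Finset G.E := G.star v \ c.support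

/-- No edge at `v` has colour `a`. -/
def Misses (c : G.Coloring) (v : G.V) (a : Bool) : Prop := ∀ e, v ∈ G.ends e → c e ≠ some a

/-- The vertex `v` misses at least one colour: it is an end of a path, possibly of length zero,
formed by coloured edges. -/
def Deficient (c : G.Coloring) (v : G.V) : Prop := ∃ a, c.Misses v a

/-- The vertex `v` misses both colours. -/
def Isolated (c : G.Coloring) (v : G.V) : Prop := ∀ a, c.Misses v a

variable {c : G.Coloring} {v : G.V} {e : G.E} {a b : Bool}

@[simp]
theorem mem_support : e ∈ c.support ↔ c e ≠ none := by
  simp [support]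

@[simp]
theorem mem_coloredStar : e ∈ c.coloredStar v ↔ v ∈ G.ends e ∧ c e ≠ none := by
  simp [coloredStar]

@[simp]
theorem mem_uncoloredStar : e ∈ c.uncoloredStar v ↔ v ∈ G.ends e ∧ c e = none := by
  simp [uncoloredStar]

theorem not_misses : ¬ c.Misses v a ↔ ∃ e, v ∈ G.ends e ∧ c e = some a := by
  simp [Misses]

theorem Isolated.deficient (hv : c.Isolated v) : c.Deficient v := ⟨true, hv true⟩

theorem Isolated.eq_none (hv : c.Isolated v) (he : v ∈ G.ends e) : c e = none :=
  Option.eq_none_iff_forall_ne_some.2 fun a ↦ hv a e he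

theorem Deficient.eq_of_not_misses (hv : c.Deficient v) (ha : ¬ c.Misses v a)
    (hb : ¬ c.Misses v b) : a = b := by
  obtain ⟨d, hd⟩ := hv
  have had : a ≠ d := by rintro rfl; exact ha hd
  have hbd : b ≠ d := by rintro rfl; exact hb hd
  rw [Bool.eq_not_of_ne had, Bool.eq_not_of_ne hbd]

theorem Deficient.misses_not (hv : c.Deficient v) (ha : ¬ c.Misses v a) : c.Misses v !a := by
  by_contra h
  simpa using hv.eq_of_not_misses ha h

theorem IsProper.card_coloredStar (hp : c.IsProper) (v : G.V) [DecidablePred (c.Misses v)] :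
    #(c.coloredStar v) = #{a | ¬ c.Misses v a} := by
  have himage : (c.coloredStar v).image c = ({a | ¬ c.Misses v a} : Finset Bool).image some := by
    ext (_ | a)
    · simp
    · simp only [mem_image, mem_coloredStar, mem_filter_univ, not_misses]
      grind
  rw [← card_image_of_injective _ (Option.some_injective Bool), ← himage, card_image_of_injOn]
  intro e he f hf hef
  simp only [mem_coe, mem_coloredStar] at he hf
  obtain ⟨a, ha⟩ := Option.ne_none_iff_exists'.1 he.2
  exact hp he.1 hf.1 ha (hef ▸ ha)

theorem IsProper.card_coloredStar_le_two (hp : c.IsProper) (v : G.V) :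
    #(c.coloredStar v) ≤ 2 := by
  classical
  rw [hp.card_coloredStar]
  exact card_le_univ _

theorem IsProper.deficient_iff (hp : c.IsProper) :
    c.Deficient v ↔ #(c.coloredStar v) ≤ 1 := by
  classical
  rw [hp.card_coloredStar, Deficient, Bool.exists_bool]
  by_cases ht : c.Misses v true <;> by_cases hf : c.Misses v false <;>
    simp [Fintype.univ_bool, filter_insert, filter_singleton, ht, hf]

theorem card_coloredStar_add_card_uncoloredStar (hl : G.Loopless) (c : G.Coloring) (v : G.V) :
    #(c.coloredStar v) + #(c.uncoloredStar v) = G.deg v := by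
  rw [coloredStar, uncoloredStar, card_inter_add_card_sdiff, hl.card_star]

theorem sum_card_coloredStar (hl : G.Loopless) (c : G.Coloring) :
    ∑ v, #(c.coloredStar v) = 2 * #c.support := by
  have hdouble := sum_card_bipartiteAbove_eq_sum_card_bipartiteBelow (s := univ) (t := c.support)
    fun (v : G.V) (e : G.E) ↦ v ∈ G.ends e
  calc ∑ v, #(c.coloredStar v)
      = ∑ v, #(c.support.bipartiteAbove (fun v e ↦ v ∈ G.ends e) v) := by
        refine sum_congr rfl fun v _ ↦ congrArg card ?_
        ext e
        simp [and_comm]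
    _ = ∑ e ∈ c.support, #(univ.bipartiteBelow (fun v e ↦ v ∈ G.ends e) e) := hdouble
    _ = ∑ _e ∈ c.support, 2 := by
        refine sum_congr rfl fun e _ ↦ ?_
        rw [← (G.ends e).card_toFinset_of_not_isDiag (hl e)]
        congr 1
        ext v
        simp
    _ = 2 * #c.support := by rw [sum_const, smul_eq_mul, mul_comm]

theorem IsProper.card_support_le_nu2 (hl : G.Loopless) (hp : c.IsProper) :
    #c.support ≤ G.nu2 := by
  have hclass (a : Bool) : G.IsMatching {e | c e = some a} := by
    refine ⟨fun e _ ↦ hl e, fun e he f hf hef v hve hvf ↦ hef ?_⟩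
    exact hp hve hvf (by simpa using he) (by simpa using hf)
  have hdisj : Disjoint ({e | c e = some true} : Finset G.E)
      ({e | c e = some false} : Finset G.E) :=
    disjoint_filter.2 fun e _ ht hf ↦ by simp [ht] at hf
  have hsupport : c.support =
      disjUnion ({e | c e = some true} : Finset G.E) {e | c e = some false} hdisj := by
    ext e
    rcases h : c e with _ | _ | _ <;> simp [h]
  rw [hsupport, card_disjUnion]
  refine le_csSup ⟨#(univ : Finset G.E) + #(univ : Finset G.E), ?_⟩
    ⟨_, _, hclass true, hclass false, hdisj, rfl⟩
  rintro m ⟨H, H', -, -, -, rfl⟩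
  exact add_le_add (card_le_univ H) (card_le_univ H')

end Basic

section Cubic

variable {c : G.Coloring} {v : G.V}

theorem IsProper.card_uncoloredStar_of_not_deficient (hp : c.IsProper) (hl : G.Loopless)
    (hv : ¬ c.Deficient v) (hdeg : G.deg v = 3) : #(c.uncoloredStar v) = 1 := by
  have := card_coloredStar_add_card_uncoloredStar hl c v
  have := hp.card_coloredStar_le_two v
  rw [hp.deficient_iff] at hv
  lia

theorem IsProper.two_le_card_uncoloredStar (hp : c.IsProper) (hl : G.Loopless)
    (hv : c.Deficient v) (hdeg : G.deg v = 3) : 2 ≤ #(c.uncoloredStar v) := by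
  have := card_coloredStar_add_card_uncoloredStar hl c v
  rw [hp.deficient_iff] at hv
  lia

end Cubic

section Recolor

variable {c : G.Coloring} {v : G.V} {e f g : G.E} {a b : Bool}

/-- Give the edge `e` the colour `a`. -/
def paint (c : G.Coloring) (e : G.E) (a : Bool) : G.Coloring := Function.update c e (some a)

/-- Remove the colour of the edge `e`. -/
def uncolor (c : G.Coloring) (e : G.E) : G.Coloring := Function.update c e none

/-- Move a colour from `f` to `e`: the edge `f` loses its colour and `e` gets the colour `a`. -/
def recolor (c : G.Coloring) (f e : G.E) (a : Bool) : G.Coloring := (c.uncolor f).paint e a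

theorem paint_apply : c.paint e a f = if f = e then some a else c f :=
  Function.update_apply ..

theorem uncolor_apply : c.uncolor e f = if f = e then none else c f :=
  Function.update_apply ..

theorem recolor_apply :
    c.recolor f e a g = if g = e then some a else if g = f then none else c g := by
  rw [recolor, paint_apply, uncolor_apply]

theorem support_paint : (c.paint e a).support = insert e c.support := by
  grind [mem_support, paint_apply]

theorem support_uncolor : (c.uncolor e).support = c.support.erase e := by
  grind [mem_support, uncolor_apply]

theorem Misses.uncolor (hv : c.Misses v a) : (c.uncolor e).Misses v a := by
  grind [Misses, uncolor_apply]

theorem Misses.paint (hv : c.Misses v b) (h : b ≠ a ∨ v ∉ G.ends e) :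
    (c.paint e a).Misses v b := by
  grind [Misses, paint_apply]

theorem IsProper.misses_uncolor (hp : c.IsProper) (he : c e = some a) (hv : v ∈ G.ends e) :
    (c.uncolor e).Misses v a := by
  grind [Misses, IsProper, uncolor_apply]

theorem IsProper.uncolor (hp : c.IsProper) : (c.uncolor e).IsProper := by
  intro v f g a hf hg hfa hga
  grind [IsProper, uncolor_apply]

theorem IsProper.paint (hp : c.IsProper) (he : ∀ v ∈ G.ends e, c.Misses v a) :
    (c.paint e a).IsProper := by
  intro v f g b hf hg hfb hgb
  grind [IsProper, Misses, paint_apply]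

end Recolor

end Coloring

section Fat

variable {G : Multigraph} {e f g h : G.E} {v x y : G.V}

theorem Loopless.eq_or_eq_or_eq_of_deg_le_three (hl : G.Loopless) (hdeg : G.deg v ≤ 3)
    (he : v ∈ G.ends e) (hf : v ∈ G.ends f) (hg : v ∈ G.ends g) (hef : e ≠ f) (heg : e ≠ g)
    (hfg : f ≠ g) (hh : v ∈ G.ends h) : h = e ∨ h = f ∨ h = g := by
  have hstar : {e, f, g} = G.star v := by
    refine eq_of_subset_of_card_le (by simp [insert_subset_iff, *]) ?_
    rwa [hl.card_star, card_eq_three.2 ⟨e, f, g, hef, heg, hfg, rfl⟩]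
  simpa using hstar.symm.subset (mem_star.2 hh)

/-- The edge `e` is one of two parallel edges that form triangles with a third vertex.
They obstruct the counting arguments when uncoloured, so colourings are required to colour them. -/
def Fat (G : Multigraph) (e : G.E) : Prop :=
  (∃ f ≠ e, G.ends f = G.ends e) ∧ ∃ z, ∀ v ∈ G.ends e, G.Adj v z

theorem Fat.of_ends_eq (he : G.Fat e) (hef : G.ends e = G.ends f) : G.Fat f := by
  obtain ⟨⟨g, hge, hg⟩, hz⟩ := he
  refine ⟨?_, hef ▸ hz⟩
  obtain rfl | hfe := eq_or_ne f e
  · exact ⟨g, hge, hg⟩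
  · exact ⟨e, hfe.symm, hef⟩

theorem Fat.exists_star_eq (hl : G.Loopless) (hdeg : G.deg x ≤ 3) (he : G.Fat e)
    (hx : x ∈ G.ends e) :
    ∃ f g z, f ≠ e ∧ G.ends f = G.ends e ∧ G.ends g = s(x, z) ∧ z ∉ G.ends e ∧
      (∀ y ∈ G.ends e, G.Adj y z) ∧ ∀ h, x ∈ G.ends h → h = e ∨ h = f ∨ h = g := by
  obtain ⟨⟨f, hfe, hf⟩, z, hz⟩ := he
  obtain ⟨g, hg⟩ := hz x hx
  have hze : z ∉ G.ends e := fun hmem ↦ by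
    obtain ⟨k, hk⟩ := hz z hmem
    exact hl.ne_of_ends_eq hk rfl
  have hne (k : G.E) (hk : G.ends k = G.ends e) : k ≠ g := by
    rintro rfl
    simp [← hk, hg] at hze
  exact ⟨f, g, z, hfe, hf, hg, hze, hz, fun h ↦ hl.eq_or_eq_or_eq_of_deg_le_three hdeg hx (hf ▸ hx)
    (by simp [hg]) hfe.symm (hne e rfl) (hne f hf)⟩

theorem Fat.eq_of_ends_ne (hl : G.Loopless) (hdeg : G.deg x ≤ 3) (he : G.Fat e)
    (hx : x ∈ G.ends e) (hg : x ∈ G.ends g) (hge : G.ends g ≠ G.ends e) (hh : x ∈ G.ends h)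
    (hhe : G.ends h ≠ G.ends e) : g = h := by
  obtain ⟨f, k, z, -, hf, -, -, -, hstar⟩ := he.exists_star_eq hl hdeg hx
  grind

theorem Fat.ends_eq (hl : G.Loopless) (hdeg : G.deg x ≤ 3) (he : G.Fat e) (hf : G.Fat f)
    (hxe : x ∈ G.ends e) (hxf : x ∈ G.ends f) : G.ends e = G.ends f := by
  by_contra hef
  obtain ⟨f', hff', hf'⟩ := hf.1
  exact hff' (he.eq_of_ends_ne hl hdeg hxe (hf' ▸ hxf) (hf' ▸ Ne.symm hef) hxf (Ne.symm hef))

theorem Fat.adj_of_ends_eq (hl : G.Loopless) (hdeg : G.deg x ≤ 3) (he : G.Fat e)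
    (hx : x ∈ G.ends e) (hg : G.ends g = s(x, v)) (hge : G.ends g ≠ G.ends e)
    (hy : y ∈ G.ends e) : G.Adj y v := by
  obtain ⟨f, k, z, -, hf, hk, -, hz, hstar⟩ := he.exists_star_eq hl hdeg hx
  have hgk : g = k := by grind [Sym2.mem_mk_left]
  rw [← Sym2.congr_right.1 (hk ▸ hgk ▸ hg : s(x, z) = s(x, v))]
  exact hz y hy

theorem Fat.eq_or_eq_of_ends_eq (hl : G.Loopless) (hdeg : ∀ v, G.deg v ≤ 3) (he : G.Fat e)
    (hf : G.ends f = G.ends e) (hg : G.ends g = G.ends e) (hfe : f ≠ e) : g = e ∨ g = f := by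
  obtain ⟨x, hx⟩ : ∃ x, x ∈ G.ends e := ⟨_, (G.ends e).out_fst_mem⟩
  obtain ⟨f', k, z, -, -, hk, hz, -, hstar⟩ := he.exists_star_eq hl (hdeg x) hx
  have hne (h : G.E) (hh : G.ends h = G.ends e) : h ≠ k := by
    rintro rfl
    simp [← hh, hk] at hz
  grind

theorem Fat.exists_ends_eq_of_notMem (hl : G.Loopless) (hdeg : G.deg x ≤ 3) (he : G.Fat e)
    (hx : x ∈ G.ends e) (hv : v ∉ G.ends e) (hg : G.ends g = s(v, x)) :
    ∃ b ∈ G.ends e, ∃ h ≠ g, G.ends h = s(v, b) := by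
  obtain ⟨b, heb⟩ := hx
  have hxb : x ≠ b := hl.ne_of_ends_eq heb
  obtain ⟨h, hh⟩ : G.Adj b v := he.adj_of_ends_eq hl hdeg (heb ▸ Sym2.mem_mk_left x b)
    (hg.trans Sym2.eq_swap) (by grind [Sym2.mem_mk_left]) (heb ▸ Sym2.mem_mk_right x b)
  refine ⟨b, heb ▸ Sym2.mem_mk_right x b, h, ?_, hh.trans Sym2.eq_swap⟩
  rintro rfl
  exact hxb.symm (Sym2.congr_left.1 (hh.symm.trans (hg.trans Sym2.eq_swap)))

-- Otherwise the edges at `v` are paired up: partners join `v` to the two ends of a fat edge.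
theorem exists_ends_eq_forall_not_fat (hl : G.Loopless) (hdeg : ∀ v, G.deg v = 3)
    (hv : ∀ e, v ∈ G.ends e → ¬ G.Fat e) :
    ∃ g x, G.ends g = s(v, x) ∧ ∀ e, x ∈ G.ends e → ¬ G.Fat e := by
  by_contra! hfat
  have hunique (e x g h) (he : G.Fat e) (hx : x ∈ G.ends e) (hg : G.ends g = s(v, x))
      (hh : G.ends h = s(v, x)) : g = h := by
    refine he.eq_of_ends_ne hl (hdeg x).le hx ?_ ?_ ?_ ?_ <;>
      grind [Sym2.mem_mk_left, Sym2.mem_mk_right]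
  have hpartner (g x) (hg : G.ends g = s(v, x)) :
      ∃ e, G.Fat e ∧ x ∈ G.ends e ∧ ∃ b ∈ G.ends e, ∃ h ≠ g, G.ends h = s(v, b) := by
    obtain ⟨e, hx, he⟩ := hfat g x hg
    exact ⟨e, he, hx, he.exists_ends_eq_of_notMem hl (hdeg x).le hx (fun h ↦ hv e h he) hg⟩
  have hthree := (hl.card_star v).trans (hdeg v)
  obtain ⟨g, hg⟩ : (G.star v).Nonempty := card_pos.1 (by lia)
  obtain ⟨x, hgx⟩ := mem_star.1 hg
  obtain ⟨e, he, hxe, b, hbe, h, hhg, hhb⟩ := hpartner g x hgx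
  obtain ⟨k, hk, hkgh⟩ : ∃ k ∈ G.star v, k ∉ ({g, h} : Finset G.E) :=
    exists_mem_notMem_of_card_lt_card (by rw [hthree]; exact card_le_two.trans_lt (by simp))
  obtain ⟨y, hky⟩ := mem_star.1 hk
  obtain ⟨e', he', hye', b', hbe', h', hhk', hhb'⟩ := hpartner k y hky
  simp only [mem_insert, mem_singleton, not_or] at hkgh
  have hvmem {x' g'} (hg' : G.ends g' = s(v, x')) : v ∈ G.ends g' := hg' ▸ Sym2.mem_mk_left v x'
  have hb'e : b' ∈ G.ends e := by
    obtain rfl | rfl | rfl := hl.eq_or_eq_or_eq_of_deg_le_three (hdeg v).le (hvmem hgx) (hvmem hhb)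
      (hvmem hky) hhg.symm (Ne.symm hkgh.1) (Ne.symm hkgh.2) (hvmem hhb')
    · rwa [← Sym2.congr_right.1 (hgx.symm.trans hhb')]
    · rwa [← Sym2.congr_right.1 (hhb.symm.trans hhb')]
    · exact absurd rfl hhk'
  have hye : y ∈ G.ends e := he.ends_eq hl (hdeg b').le he' hb'e hbe' ▸ hye'
  have hxb : x ≠ b := by
    rintro rfl
    exact hhg (hunique e x h g he hxe hhb hgx)
  rw [(Sym2.mem_and_mem_iff hxb).1 ⟨hxe, hbe⟩, Sym2.mem_iff] at hye
  obtain rfl | rfl := hye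
  · exact hkgh.1 (hunique e y k g he hxe hky hgx)
  · exact hkgh.2 (hunique e y k h he hbe hky hhb)

theorem exists_isProper_fat_ne_none (hl : G.Loopless) (hdeg : ∀ v, G.deg v ≤ 3) :
    ∃ c : G.Coloring, c.IsProper ∧ ∀ e, G.Fat e → c e ≠ none := by
  classical
  let rep (e : G.E) : G.E := Set.rangeSplitting G.ends ⟨G.ends e, e, rfl⟩
  have hrep (e : G.E) : G.ends (rep e) = G.ends e := Set.apply_rangeSplitting G.ends _
  refine ⟨fun e ↦ if G.Fat e then some (decide (rep e = e)) else none, ?_, by simp +contextual⟩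
  intro v e f a hve hvf hea hfa
  have he : G.Fat e := by grind
  have hf : G.Fat f := by grind
  have hef : G.ends f = G.ends e := hf.ends_eq hl (hdeg v) he hvf hve
  have : rep f = rep e := by simp only [rep, hef]
  by_contra hne
  have := he.eq_or_eq_of_ends_eq hl hdeg hef (hrep e) (Ne.symm hne)
  grind

end Fat

namespace Coloring

section Optimal

variable {G : Multigraph} {c c' : G.Coloring} {e f : G.E} {u v w : G.V} {a : Bool}

/-- A proper colouring under which every fat edge is coloured. -/
def Admissible (c : G.Coloring) : Prop := c.IsProper ∧ ∀ e, G.Fat e → c e ≠ none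

/-- An admissible colouring with the maximum number of coloured edges. -/
def Optimal (c : G.Coloring) : Prop :=
  c.Admissible ∧ ∀ c' : G.Coloring, c'.Admissible → #c'.support ≤ #c.support

open Classical in
/-- An optimal colouring with the minimum number of isolated vertices. -/
def Extremal (c : G.Coloring) : Prop :=
  c.Optimal ∧ ∀ c' : G.Coloring, c'.Optimal → #{v | c.Isolated v} ≤ #{v | c'.Isolated v}

theorem exists_extremal (hl : G.Loopless) (hdeg : ∀ v, G.deg v ≤ 3) :
    ∃ c : G.Coloring, c.Extremal := by
  classical
  obtain ⟨c₀, hc₀⟩ : ∃ c : G.Coloring, c.Admissible := exists_isProper_fat_ne_none hl hdeg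
  obtain ⟨c₁, hc₁, hmax⟩ :=
    Set.exists_max_image {c : G.Coloring | c.Admissible} (#·.support) (Set.toFinite _) ⟨c₀, hc₀⟩
  exact Set.exists_min_image {c : G.Coloring | c.Optimal} (fun c ↦ #{v | c.Isolated v})
    (Set.toFinite _) ⟨c₁, hc₁, hmax⟩

theorem Admissible.not_deficient_of_fat (hc : c.Admissible) (he : G.Fat e)
    (hv : v ∈ G.ends e) : ¬ c.Deficient v := by
  intro hdef
  obtain ⟨f, hfe, hf⟩ := he.1
  obtain ⟨a, ha⟩ := Option.ne_none_iff_exists'.1 (hc.2 e he)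
  obtain ⟨b, hb⟩ := Option.ne_none_iff_exists'.1 (hc.2 f (he.of_ends_eq hf.symm))
  have hab : a = b := hdef.eq_of_not_misses (not_misses.2 ⟨e, hv, ha⟩)
    (not_misses.2 ⟨f, hf ▸ hv, hb⟩)
  exact hfe (hc.1 (hf ▸ hv) hv hb (hab ▸ ha))

theorem Optimal.isProper (hc : c.Optimal) : c.IsProper := hc.1.1

theorem Optimal.not_fat (hc : c.Optimal) (he : c e = none) : ¬ G.Fat e :=
  fun h ↦ hc.1.2 e h he

theorem Optimal.of_card_le (hc : c.Optimal) (hc' : c'.Admissible)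
    (h : #c.support ≤ #c'.support) : c'.Optimal :=
  ⟨hc', fun c'' hc'' ↦ (hc.2 c'' hc'').trans h⟩

theorem Optimal.not_misses (hc : c.Optimal) (he : c e = none) (hends : G.ends e = s(u, w))
    (hu : c.Misses u a) : ¬ c.Misses w a := by
  intro hw
  have hpaint : (c.paint e a).Admissible := by
    refine ⟨hc.isProper.paint ?_, fun f hf ↦ ?_⟩
    · grind
    · grind [paint_apply, hc.1.2 f hf]
  have := hc.2 _ hpaint
  rw [support_paint, card_insert_of_notMem (by simpa using he)] at this
  lia

theorem Optimal.recolor (hc : c.Optimal) (hf : c f = some a) (hfat : ¬ G.Fat f) (he : c e = none)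
    (hmiss : ∀ v ∈ G.ends e, (c.uncolor f).Misses v a) : (c.recolor f e a).Optimal := by
  refine hc.of_card_le ⟨hc.isProper.uncolor.paint hmiss, fun g hg ↦ ?_⟩ ?_
  · grind [recolor_apply, hc.1.2 g hg]
  · rw [Coloring.recolor, support_paint, support_uncolor, card_insert_of_notMem,
      card_erase_add_one] <;> simp [hf, he]

end Optimal

end Coloring

open Classical in
theorem card_degree_le_one_le_two {V : Type*} [Fintype V] {H : SimpleGraph V}
    (hconn : H.Connected) (hdeg : ∀ v, H.degree v ≤ 2) : #{v | H.degree v ≤ 1} ≤ 2 := by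
  have hedges : Fintype.card V ≤ #H.edgeFinset + 1 := by
    rw [SimpleGraph.edgeFinset_card, ← Nat.card_eq_fintype_card, ← Nat.card_eq_fintype_card]
    exact hconn.card_vert_le_card_edgeSet_add_one
  have hdegrees : 2 * #H.edgeFinset + #{v | H.degree v ≤ 1} ≤ 2 * Fintype.card V := by
    calc 2 * #H.edgeFinset + #{v | H.degree v ≤ 1}
        = ∑ v, (H.degree v + if H.degree v ≤ 1 then 1 else 0) := by
          rw [sum_add_distrib, H.sum_degrees_eq_twice_card_edges, card_filter]
      _ ≤ ∑ _v : V, 2 := by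
          refine sum_le_sum fun v _ ↦ ?_
          have := hdeg v
          split_ifs <;> lia
      _ = 2 * Fintype.card V := by simp [mul_comm]
  lia

namespace Coloring

section Graph

variable {G : Multigraph} {c : G.Coloring} {e : G.E} {u v w x y z : G.V} {a : Bool}

/-- The simple graph formed by the coloured edges. -/
def graph (c : G.Coloring) : SimpleGraph G.V := SimpleGraph.fromEdgeSet (G.ends '' c.support)

theorem graph_adj : c.graph.Adj v w ↔ (∃ e, c e ≠ none ∧ G.ends e = s(v, w)) ∧ v ≠ w := by
  simp [graph, SimpleGraph.fromEdgeSet_adj]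

theorem reachable_of_mem (he : c e ≠ none) (hv : v ∈ G.ends e) (hw : w ∈ G.ends e) :
    c.graph.Reachable v w := by
  obtain rfl | hvw := eq_or_ne v w
  · rfl
  · exact (graph_adj.2 ⟨⟨e, he, (Sym2.mem_and_mem_iff hvw).1 ⟨hv, hw⟩⟩, hvw⟩).reachable

theorem reachable_lift {Γ : SimpleGraph G.V}
    (h : ∀ e v w, c e ≠ none → G.ends e = s(v, w) → Γ.Reachable v w)
    (hvw : c.graph.Reachable v w) : Γ.Reachable v w := by
  rw [SimpleGraph.reachable_iff_reflTransGen] at hvw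
  induction hvw with
  | refl => rfl
  | tail _ hadj ih =>
    obtain ⟨⟨e, he, hends⟩, -⟩ := graph_adj.1 hadj
    exact ih.trans (h e _ _ he hends)

open Classical in
theorem degree_graph_le (v : G.V) : c.graph.degree v ≤ #(c.coloredStar v) := by
  rw [← SimpleGraph.card_incidenceFinset_eq_degree]
  refine (card_le_card fun s hs ↦ ?_).trans (card_image_le (f := G.ends))
  obtain ⟨hs, hv⟩ := (SimpleGraph.mem_incidenceFinset ..).1 hs
  rw [graph, SimpleGraph.edgeSet_fromEdgeSet] at hs
  obtain ⟨⟨e, he, rfl⟩, -⟩ := hs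
  exact mem_image_of_mem _ (mem_coloredStar.2 ⟨hv, mem_support.1 he⟩)

theorem IsProper.eq_or_eq_of_reachable (hp : c.IsProper) (hx : c.Deficient x)
    (hy : c.Deficient y) (hz : c.Deficient z) (hxy : x ≠ y) (hrxy : c.graph.Reachable x y)
    (hrxz : c.graph.Reachable x z) : z = x ∨ z = y := by
  classical
  by_contra! hne
  let K := c.graph.connectedComponentMk x
  let H : SimpleGraph K.supp := c.graph.induce K.supp
  have hconn : H.Connected := K.connected_toSimpleGraph
  have hmem {v} (hv : c.graph.Reachable x v) : v ∈ K.supp :=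
    SimpleGraph.ConnectedComponent.sound hv.symm
  have hdegree (v : K.supp) : H.degree v ≤ #(c.coloredStar v) :=
    ((SimpleGraph.Embedding.induce K.supp).toCopy.degree_le v).trans (degree_graph_le v.1)
  have hcard := card_degree_le_one_le_two hconn fun v ↦
    (hdegree v).trans (hp.card_coloredStar_le_two v)
  have hend {v} (hv : c.Deficient v) (hr : c.graph.Reachable x v) :
      (⟨v, hmem hr⟩ : K.supp) ∈ ({v | H.degree v ≤ 1} : Finset K.supp) :=
    mem_filter_univ _ |>.2 ((hdegree _).trans (hp.deficient_iff.1 hv))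
  refine hcard.not_gt (two_lt_card.2 ⟨_, hend hx .rfl, _, hend hy hrxy, _, hend hz hrxz, ?_⟩)
  simp [hxy, hne.1.symm, hne.2.symm]

open Classical in
/-- Exchange the two colours on the component of `u`. -/
noncomputable def kempe (c : G.Coloring) (u : G.V) : G.Coloring := fun e ↦
  if ∃ v ∈ G.ends e, c.graph.Reachable u v then (c e).map not else c e

open Classical in
theorem kempe_apply (hv : v ∈ G.ends e) :
    c.kempe u e = if c.graph.Reachable u v then (c e).map not else c e := by
  cases he : c e with
  | none => simp [kempe, he]
  | some a =>
    have hiff : (∃ w ∈ G.ends e, c.graph.Reachable u w) ↔ c.graph.Reachable u v :=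
      ⟨fun ⟨w, hw, h⟩ ↦ h.trans (reachable_of_mem (by simp [he]) hw hv), fun h ↦ ⟨v, hv, h⟩⟩
    simp [kempe, he, hiff]

theorem kempe_eq_none_iff : c.kempe u e = none ↔ c e = none := by
  rw [kempe]
  split_ifs <;> simp

theorem misses_kempe_of_reachable (h : c.graph.Reachable u v) :
    (c.kempe u).Misses v a ↔ c.Misses v !a := by
  refine forall₂_congr fun e he ↦ not_congr ?_
  rw [kempe_apply he, if_pos h]
  cases c e <;> simp [Bool.not_eq_eq_eq_not]

theorem misses_kempe_of_not_reachable (h : ¬ c.graph.Reachable u v) :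
    (c.kempe u).Misses v a ↔ c.Misses v a :=
  forall₂_congr fun e he ↦ by rw [kempe_apply he, if_neg h]

theorem IsProper.kempe (hp : c.IsProper) (u : G.V) : (c.kempe u).IsProper := by
  classical
  intro v e f a he hf hea hfa
  rw [kempe_apply he] at hea
  rw [kempe_apply hf] at hfa
  split_ifs at hea hfa
  · obtain ⟨b, hb, rfl⟩ := Option.map_eq_some_iff.1 hea
    obtain ⟨b', hb', h⟩ := Option.map_eq_some_iff.1 hfa
    exact hp he hf hb (Bool.not_inj h ▸ hb')
  · exact hp he hf hea hfa

theorem Optimal.kempe (hc : c.Optimal) (u : G.V) : (c.kempe u).Optimal := by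
  refine hc.of_card_le ⟨hc.isProper.kempe u, fun e he ↦ ?_⟩ (card_le_card fun e ↦ ?_)
  · exact kempe_eq_none_iff.not.2 (hc.1.2 e he)
  · simp [kempe_eq_none_iff]

-- If `u` and `w` miss the same colour, `e` could be coloured; if they miss different colours and
-- lie in different components, exchanging the colours on one component reduces to that case.
theorem Optimal.reachable_of_deficient (hc : c.Optimal) (he : c e = none)
    (hends : G.ends e = s(u, w)) (hu : c.Deficient u) (hw : c.Deficient w) :
    c.graph.Reachable u w := by
  by_contra hr
  obtain ⟨a, ha⟩ := hu
  have hwa : c.Misses w !a := hw.misses_not (hc.not_misses he hends ha)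
  exact (hc.kempe u).not_misses (kempe_eq_none_iff.2 he) hends
    ((misses_kempe_of_reachable .rfl).2 (by simpa using ha))
    ((misses_kempe_of_not_reachable hr).2 hwa)

end Graph

section Rotation

variable {G : Multigraph} {c : G.Coloring} {e g h : G.E} {m q u v w x : G.V} {a : Bool}

/-- An uncoloured edge with two deficient ends. When `c` is optimal, it closes a coloured path
joining its ends into an odd cycle. -/
def IsClosing (c : G.Coloring) (e : G.E) : Prop := c e = none ∧ ∀ v ∈ G.ends e, c.Deficient v

theorem IsClosing.reachable (he : c.IsClosing e) (hc : c.Optimal) (hv : v ∈ G.ends e)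
    (hw : w ∈ G.ends e) : c.graph.Reachable v w := by
  obtain rfl | hvw := eq_or_ne v w
  · rfl
  · exact hc.reachable_of_deficient he.1 ((Sym2.mem_and_mem_iff hvw).1 ⟨hv, hw⟩) (he.2 v hv)
      (he.2 w hw)

theorem IsClosing.misses_uncolor (he : c.IsClosing e) (hc : c.Optimal) (hx : x ∈ G.ends e)
    (hxh : x ∈ G.ends h) (hh : c h = some a) (hv : v ∈ G.ends e) :
    (c.uncolor h).Misses v a := by
  have hxa : ¬ c.Misses x a := not_misses.2 ⟨h, hxh, hh⟩
  have hxna : c.Misses x !a := (he.2 x hx).misses_not hxa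
  obtain rfl | hvx := eq_or_ne v x
  · exact hc.isProper.misses_uncolor hh hxh
  · have hvna := hc.not_misses he.1 ((Sym2.mem_and_mem_iff hvx.symm).1 ⟨hx, hv⟩) hxna
    exact Misses.uncolor (by simpa using (he.2 v hv).misses_not hvna)

theorem IsClosing.recolor (he : c.IsClosing e) (hp : c.IsProper) (hh : c h = some a) :
    (c.recolor h e a).IsClosing h := by
  refine ⟨by grind [recolor_apply, he.1], fun v hv ↦ ?_⟩
  by_cases hve : v ∈ G.ends e
  · have hva : c.Misses v !a := (he.2 v hve).misses_not (not_misses.2 ⟨h, hv, hh⟩)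
    exact ⟨!a, hva.uncolor.paint (.inl (by simp))⟩
  · exact ⟨a, (hp.misses_uncolor hh hv).paint (.inr hve)⟩

theorem IsClosing.optimal_recolor (he : c.IsClosing e) (hc : c.Optimal) (hx : x ∈ G.ends e)
    (hxh : x ∈ G.ends h) (hh : c h = some a) : (c.recolor h e a).Optimal :=
  hc.recolor hh (fun hfat ↦ hc.1.not_deficient_of_fat hfat hxh (he.2 x hx)) he.1
    fun _ ↦ he.misses_uncolor hc hx hxh hh

theorem insert_support_recolor (hh : c h = some a) :
    insert h (c.recolor h e a).support = insert e c.support := by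
  rw [recolor, support_paint, support_uncolor, Finset.insert_comm, insert_erase (by simp [hh])]

theorem IsClosing.exists_isClosing_of_reachable (he : c.IsClosing e) (hc : c.Optimal)
    (hu : u ∈ G.ends e) (hm : c.graph.Reachable u m) :
    ∃ (c' : G.Coloring) (f : G.E), c'.Optimal ∧ c'.IsClosing f ∧ m ∈ G.ends f ∧
      insert f c'.support = insert e c.support := by
  rw [SimpleGraph.reachable_iff_reflTransGen] at hm
  induction hm with
  | refl => exact ⟨c, e, hc, he, hu, rfl⟩
  | @tail x y _ hadj ih =>
    obtain ⟨c', f, hc', hf, hxf, hsupport⟩ := ih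
    obtain ⟨⟨h, hh, hends⟩, -⟩ := graph_adj.1 hadj
    have hx : x ∈ G.ends h := hends ▸ Sym2.mem_mk_left x y
    have hy : y ∈ G.ends h := hends ▸ Sym2.mem_mk_right x y
    have hmem : h ∈ insert f c'.support := hsupport ▸ mem_insert_of_mem (mem_support.2 hh)
    obtain rfl | hh' := mem_insert.1 hmem
    · exact ⟨c', h, hc', hf, hy, hsupport⟩
    · obtain ⟨a, ha⟩ := Option.ne_none_iff_exists'.1 (mem_support.1 hh')
      exact ⟨c'.recolor h f a, h, hf.optimal_recolor hc' hxf hx ha, hf.recolor hc'.isProper ha, hy,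
        (insert_support_recolor ha).trans hsupport⟩

-- Rotating the uncoloured edge of the odd cycle closed by `e` to `m` makes `g` closing too.
theorem IsClosing.reachable_of_deficient (he : c.IsClosing e) (hc : c.Optimal)
    (hu : u ∈ G.ends e) (hm : c.graph.Reachable u m) (hg : c g = none)
    (hends : G.ends g = s(m, q)) (hq : c.Deficient q) : c.graph.Reachable u q := by
  by_cases hqe : q ∈ G.ends e
  · exact he.reachable hc hu hqe
  obtain ⟨c', f, hc', hf, hmf, hsupport⟩ := he.exists_isClosing_of_reachable hc hu hm
  have hsubset : c'.support ⊆ insert e c.support := hsupport ▸ subset_insert f _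
  have hg' : c' g = none := by
    by_contra h
    have : g ∈ insert e c.support := hsubset (mem_support.2 h)
    grind [mem_support]
  have hq' : c'.Deficient q := by
    rw [hc.isProper.deficient_iff] at hq
    refine hc'.isProper.deficient_iff.2 ((card_le_card fun k hk ↦ ?_).trans hq)
    have := hsubset (mem_inter.1 hk).2
    grind [mem_coloredStar, mem_support]
  have hmq : c'.graph.Reachable m q := hc'.reachable_of_deficient hg' hends (hf.2 m hmf) hq'
  refine hm.trans (reachable_lift (fun k v w hk hkends ↦ ?_) hmq)
  obtain rfl | hk := mem_insert.1 (hsubset (mem_support.2 hk))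
  · exact he.reachable hc (hkends ▸ Sym2.mem_mk_left v w) (hkends ▸ Sym2.mem_mk_right v w)
  · exact reachable_of_mem (mem_support.1 hk) (hkends ▸ Sym2.mem_mk_left v w)
      (hkends ▸ Sym2.mem_mk_right v w)

end Rotation

section Ends

variable {G : Multigraph} {c : G.Coloring} {f g : G.E} {m u v w x y : G.V} {a : Bool}

/-- A deficient vertex on a closing edge: an end of a coloured path that lies on an odd cycle. -/
def ClosedEnd (c : G.Coloring) (v : G.V) : Prop := ∃ e, c.IsClosing e ∧ v ∈ G.ends e

/-- An end of a coloured path of positive length, not on a closing edge. -/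
def OpenEnd (c : G.Coloring) (v : G.V) : Prop := c.Deficient v ∧ ¬ c.Isolated v ∧ ¬ c.ClosedEnd v

/-- The vertices `u` and `v` are the ends of an uncoloured edge. -/
def UncoloredAdj (c : G.Coloring) (u v : G.V) : Prop := ∃ e, c e = none ∧ G.ends e = s(u, v)

theorem UncoloredAdj.symm (h : c.UncoloredAdj u v) : c.UncoloredAdj v u := by
  obtain ⟨e, he, hends⟩ := h
  exact ⟨e, he, hends.trans Sym2.eq_swap⟩

theorem IsProper.eq_of_uncoloredAdj (hp : c.IsProper) (hl : G.Loopless) (hdeg : G.deg m = 3)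
    (hm : ¬ c.Deficient m) (hu : c.UncoloredAdj m u) (hw : c.UncoloredAdj m w) : u = w := by
  obtain ⟨e, he, heu⟩ := hu
  obtain ⟨f, hf, hfw⟩ := hw
  have hcard := hp.card_uncoloredStar_of_not_deficient hl hm hdeg
  obtain rfl : e = f := card_le_one.1 hcard.le
    e (mem_uncoloredStar.2 ⟨heu ▸ Sym2.mem_mk_left m u, he⟩)
    f (mem_uncoloredStar.2 ⟨hfw ▸ Sym2.mem_mk_left m w, hf⟩)
  exact Sym2.congr_right.1 (heu.symm.trans hfw)

theorem IsProper.eq_of_graph_adj (hp : c.IsProper) (hy : c.Deficient y)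
    (hu : c.graph.Adj u y) (hw : c.graph.Adj w y) : u = w := by
  obtain ⟨⟨e, he, heu⟩, -⟩ := graph_adj.1 hu
  obtain ⟨⟨f, hf, hfw⟩, -⟩ := graph_adj.1 hw
  have hye : y ∈ G.ends e := heu ▸ Sym2.mem_mk_right u y
  have hyf : y ∈ G.ends f := hfw ▸ Sym2.mem_mk_right w y
  have hcard := hp.deficient_iff.1 hy
  obtain rfl : e = f := card_le_one.1 hcard e (mem_coloredStar.2 ⟨hye, he⟩)
    f (mem_coloredStar.2 ⟨hyf, hf⟩)
  exact Sym2.congr_left.1 (heu.symm.trans hfw)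

theorem Isolated.eq_of_reachable (hv : c.Isolated v) (h : c.graph.Reachable u v) : u = v := by
  rw [SimpleGraph.reachable_iff_reflTransGen] at h
  obtain rfl | ⟨x, -, hadj⟩ := h.cases_tail
  · rfl
  · obtain ⟨⟨e, he, hends⟩, -⟩ := graph_adj.1 hadj
    exact absurd (hv.eq_none (hends ▸ Sym2.mem_mk_right x v)) he

theorem Optimal.not_deficient_of_isolated (hc : c.Optimal) (hv : c.Isolated v)
    (hg : G.ends g = s(v, x)) : ¬ c.Deficient x := by
  rintro ⟨a, ha⟩
  exact hc.not_misses (hv.eq_none (hg ▸ Sym2.mem_mk_left v x)) hg (hv a) ha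

theorem ClosedEnd.deficient (hu : c.ClosedEnd u) : c.Deficient u := by
  obtain ⟨e, he, hue⟩ := hu
  exact he.2 u hue

theorem ClosedEnd.not_isolated (hu : c.ClosedEnd u) (hc : c.Optimal) : ¬ c.Isolated u := by
  obtain ⟨e, he, w, hends⟩ := hu
  intro hiso
  exact hc.not_deficient_of_isolated hiso hends (he.2 w (hends ▸ Sym2.mem_mk_right u w))

theorem Extremal.deficient_of_isolated (hc : c.Extremal) (hv : c.Isolated v)
    (hg : G.ends g = s(v, x)) (hf : G.ends f = s(x, y)) (hfa : c f = some a)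
    (hfat : ¬ G.Fat f) : c.Deficient y := by
  classical
  by_contra hy
  have hgv : v ∈ G.ends g := hg ▸ Sym2.mem_mk_left v x
  have hgx : x ∈ G.ends g := hg ▸ Sym2.mem_mk_right v x
  have hfx : x ∈ G.ends f := hf ▸ Sym2.mem_mk_left x y
  have hopt : (c.recolor f g a).Optimal := hc.1.recolor hfa hfat (hv.eq_none hgv) <| by
    simp only [hg, Sym2.mem_iff, forall_eq_or_imp, forall_eq]
    exact ⟨(hv a).uncolor, hc.1.isProper.misses_uncolor hfa hfx⟩
  have hsubset {w} (hw : (c.recolor f g a).Isolated w) : c.Isolated w := by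
    have hnone {k} (hk : w ∈ G.ends k) (hkf : k ≠ f) : c k = none := by
      grind [recolor_apply, hw.eq_none hk, hv.eq_none hgv]
    have hwf : w ∉ G.ends f := fun h ↦ by
      have hwx : w ≠ x := by
        rintro rfl
        simpa [recolor_apply] using hw.eq_none hgx
      obtain rfl : w = y := (Sym2.mem_iff.1 (hf ▸ h)).resolve_left hwx
      refine hy ⟨!a, fun k hk hka ↦ ?_⟩
      have hkf : k ≠ f := by
        rintro rfl
        simp [hfa] at hka
      simp [hnone hk hkf] at hka
    intro b k hk hkb
    simp [hnone hk (by rintro rfl; exact hwf hk)] at hkb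
  refine (hc.2 _ hopt).not_gt (card_lt_card ?_)
  refine (ssubset_iff_of_subset (monotone_filter_right _ fun _ _ ↦ hsubset)).2 ⟨v, by simpa, ?_⟩
  rw [mem_filter_univ]
  exact fun h ↦ by simpa [recolor_apply] using h.eq_none hgv

theorem Extremal.openEnd_of_isolated (hc : c.Extremal) (hv : c.Isolated v) (hg : G.ends g = s(v, x))
    (hf : G.ends f = s(x, y)) (hfa : c f = some a) (hfat : ¬ G.Fat f) : c.OpenEnd y := by
  have hfx : x ∈ G.ends f := hf ▸ Sym2.mem_mk_left x y
  have hfy : y ∈ G.ends f := hf ▸ Sym2.mem_mk_right x y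
  have hy : ¬ c.Isolated y := fun h ↦ by simpa [hfa] using h.eq_none hfy
  refine ⟨hc.deficient_of_isolated hv hg hf hfa hfat, hy, ?_⟩
  rintro ⟨e, he, hye⟩
  have hyv : c.graph.Reachable y v := he.reachable_of_deficient hc.1 hye
    (reachable_of_mem (by simp [hfa]) hfy hfx) (hv.eq_none (hg ▸ Sym2.mem_mk_left v x))
    (hg.trans Sym2.eq_swap) hv.deficient
  exact hy (hv.eq_of_reachable hyv ▸ hv)

theorem Extremal.exists_openEnd (hc : c.Extremal) (hl : G.Loopless) (hdeg : ∀ v, G.deg v = 3)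
    (hv : c.Isolated v) :
    ∃ x, c.UncoloredAdj v x ∧ ¬ c.Deficient x ∧ ∃ y z, y ≠ z ∧
      c.OpenEnd y ∧ c.graph.Adj x y ∧ c.OpenEnd z ∧ c.graph.Adj x z := by
  obtain ⟨g, x, hg, hx⟩ := exists_ends_eq_forall_not_fat hl hdeg fun e he ↦
    hc.1.not_fat (hv.eq_none he)
  have hgnone : c g = none := hv.eq_none (hg ▸ Sym2.mem_mk_left v x)
  have hpath (a : Bool) : ∃ f y, c f = some a ∧ G.ends f = s(x, y) ∧ c.OpenEnd y := by
    obtain ⟨f, ⟨y, hf⟩, hfa⟩ := not_misses.1 (hc.1.not_misses hgnone hg (hv a))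
    exact ⟨f, y, hfa, hf, hc.openEnd_of_isolated hv hg hf hfa (hx f (hf ▸ Sym2.mem_mk_left x y))⟩
  have hadj {f y a} (hfa : c f = some a) (hf : G.ends f = s(x, y)) : c.graph.Adj x y :=
    graph_adj.2 ⟨⟨f, by simp [hfa], hf⟩, hl.ne_of_ends_eq hf⟩
  obtain ⟨f, y, hfa, hf, hy⟩ := hpath true
  obtain ⟨h, z, hha, hh, hz⟩ := hpath false
  refine ⟨x, ⟨g, hgnone, hg⟩, hc.1.not_deficient_of_isolated hv hg, y, z, ?_,
    hy, hadj hfa hf, hz, hadj hha hh⟩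
  rintro rfl
  simpa using hy.1.eq_of_not_misses (not_misses.2 ⟨f, hf ▸ Sym2.mem_mk_right x y, hfa⟩)
    (not_misses.2 ⟨h, hh ▸ Sym2.mem_mk_right x y, hha⟩)

open Classical in
theorem Extremal.two_mul_card_isolated_le (hc : c.Extremal) (hl : G.Loopless)
    (hdeg : ∀ v, G.deg v = 3) : 2 * #{v | c.Isolated v} ≤ #{v | c.OpenEnd v} := by
  have hp := hc.1.isProper
  have hcount := card_mul_le_card_mul (s := {v | c.Isolated v}) (t := {v | c.OpenEnd v})
    (fun v y ↦ ∃ x, c.UncoloredAdj v x ∧ ¬ c.Deficient x ∧ c.graph.Adj x y) (m := 2) (n := 1) ?_ ?_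
  · lia
  · intro v hv
    obtain ⟨x, hvx, hx, y, z, hyz, hy, hxy, hz, hxz⟩ :=
      hc.exists_openEnd hl hdeg ((mem_filter_univ v).1 hv)
    refine one_lt_card.2 ⟨y, ?_, z, ?_, hyz⟩ <;> rw [mem_bipartiteAbove, mem_filter_univ]
    · exact ⟨hy, x, hvx, hx, hxy⟩
    · exact ⟨hz, x, hvx, hx, hxz⟩
  · intro y hy
    have hdef : c.Deficient y := ((mem_filter_univ y).1 hy).1
    refine card_le_one.2 fun v hv w hw ↦ ?_
    obtain ⟨-, x, hvx, hx, hxy⟩ := (mem_bipartiteBelow _).1 hv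
    obtain ⟨-, x', hwx', -, hxy'⟩ := (mem_bipartiteBelow _).1 hw
    obtain rfl : x = x' := hp.eq_of_graph_adj hdef hxy hxy'
    exact hp.eq_of_uncoloredAdj hl (hdeg x) hx hvx.symm hwx'.symm

end Ends

section Satellites

variable {G : Multigraph} {c : G.Coloring} {S : Finset G.V} {m : G.V}

open Classical in
/-- The vertices missing no colour that an uncoloured edge joins to a vertex of `S`. In a cubic
graph they are satellites of one vertex only, having a single uncoloured edge. -/
noncomputable def satellites (c : G.Coloring) (S : Finset G.V) : Finset G.V :=
  {m | ¬ c.Deficient m ∧ ∃ v ∈ S, c.UncoloredAdj v m}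

@[simp]
theorem mem_satellites :
    m ∈ c.satellites S ↔ ¬ c.Deficient m ∧ ∃ v ∈ S, c.UncoloredAdj v m := by
  simp [satellites]

theorem IsProper.mul_card_le_card_satellites (hp : c.IsProper) (hl : G.Loopless)
    (hdeg : ∀ v, G.deg v = 3) {k : ℕ} (hk : ∀ v ∈ S, k ≤ #(c.uncoloredStar v))
    (hS : ∀ v ∈ S, ∀ m, c.UncoloredAdj v m → ¬ c.Deficient m) :
    k * #S ≤ #(c.satellites S) := by
  classical
  have hcount := card_mul_le_card_mul (s := S) (t := c.satellites S) c.UncoloredAdj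
    (m := k) (n := 1) (fun v hv ↦ (hk v hv).trans ?_) (fun m hm ↦ ?_)
  · lia
  · refine card_le_card_of_forall_subsingleton (fun e m ↦ G.ends e = s(v, m)) ?_ ?_
    · intro e he
      obtain ⟨⟨m, hends⟩, hnone⟩ := mem_uncoloredStar.1 he
      have hvm : c.UncoloredAdj v m := ⟨e, hnone, hends⟩
      exact ⟨m, (mem_bipartiteAbove _).2
        ⟨mem_satellites.2 ⟨hS v hv m hvm, v, hv, hvm⟩, hvm⟩, hends⟩
    · rintro m hm e ⟨he, hem⟩ f ⟨hf, hfm⟩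
      have hmdef := hS v hv m ((mem_bipartiteAbove _).1 hm).2
      refine card_le_one.1 (hp.card_uncoloredStar_of_not_deficient hl hmdef (hdeg m)).le
        e (mem_uncoloredStar.2 ⟨?_, (mem_uncoloredStar.1 he).2⟩)
        f (mem_uncoloredStar.2 ⟨?_, (mem_uncoloredStar.1 hf).2⟩)
      · exact hem ▸ Sym2.mem_mk_right v m
      · exact hfm ▸ Sym2.mem_mk_right v m
  · have hmdef := (mem_satellites.1 hm).1
    refine card_le_one.2 fun v hv w hw ↦ hp.eq_of_uncoloredAdj hl (hdeg m) hmdef ?_ ?_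
    · exact ((mem_bipartiteBelow _).1 hv).2.symm
    · exact ((mem_bipartiteBelow _).1 hw).2.symm

theorem IsProper.disjoint_satellites (hp : c.IsProper) (hl : G.Loopless)
    (hdeg : ∀ v, G.deg v = 3) {T : Finset G.V} (h : Disjoint S T) :
    Disjoint (c.satellites S) (c.satellites T) := by
  refine disjoint_left.2 fun m hmS hmT ↦ ?_
  obtain ⟨hm, v, hv, hvm⟩ := mem_satellites.1 hmS
  obtain ⟨-, w, hw, hwm⟩ := mem_satellites.1 hmT
  obtain rfl := hp.eq_of_uncoloredAdj hl (hdeg m) hm hvm.symm hwm.symm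
  exact disjoint_left.1 h hv hw

open Classical in
theorem Optimal.three_mul_card_isolated_le (hc : c.Optimal) (hl : G.Loopless)
    (hdeg : ∀ v, G.deg v = 3) :
    3 * #{v | c.Isolated v} ≤ #(c.satellites {v | c.Isolated v}) := by
  refine hc.isProper.mul_card_le_card_satellites hl hdeg (fun v hv ↦ ?_) fun v hv m hvm ↦ ?_
  · have hempty : #(c.coloredStar v) = 0 := card_eq_zero.2 <| eq_empty_of_forall_notMem fun e he ↦
      (mem_coloredStar.1 he).2 (((mem_filter_univ v).1 hv).eq_none (mem_coloredStar.1 he).1)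
    have := card_coloredStar_add_card_uncoloredStar hl c v
    have := hdeg v
    lia
  · obtain ⟨e, -, hends⟩ := hvm
    exact hc.not_deficient_of_isolated ((mem_filter_univ v).1 hv) hends

open Classical in
theorem IsProper.two_mul_card_openEnd_le (hp : c.IsProper) (hl : G.Loopless)
    (hdeg : ∀ v, G.deg v = 3) :
    2 * #{v | c.OpenEnd v} ≤ #(c.satellites {v | c.OpenEnd v}) := by
  refine hp.mul_card_le_card_satellites hl hdeg (fun v hv ↦ ?_) fun v hv m hvm hm ↦ ?_
  · exact hp.two_le_card_uncoloredStar hl ((mem_filter_univ v).1 hv).1 (hdeg v)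
  · obtain ⟨hvdef, -, hclosed⟩ := (mem_filter_univ v).1 hv
    obtain ⟨e, he, hends⟩ := hvm
    refine hclosed ⟨e, ⟨he, ?_⟩, hends ▸ Sym2.mem_mk_left v m⟩
    simp only [hends, Sym2.mem_iff, forall_eq_or_imp, forall_eq]
    exact ⟨hvdef, hm⟩

end Satellites

section OddCycle

variable {G : Multigraph} {c : G.Coloring} {e f h : G.E} {m q u v w x y z : G.V} {a : Bool}

theorem IsClosing.eq_or_eq_of_reachable (he : c.IsClosing e) (hc : c.Optimal) (hl : G.Loopless)
    (hends : G.ends e = s(u, w)) (hq : c.Deficient q) (h : c.graph.Reachable u q) :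
    q = u ∨ q = w := by
  have hu : u ∈ G.ends e := hends ▸ Sym2.mem_mk_left u w
  have hw : w ∈ G.ends e := hends ▸ Sym2.mem_mk_right u w
  exact hc.isProper.eq_or_eq_of_reachable (he.2 u hu) (he.2 w hw) hq (hl.ne_of_ends_eq hends)
    (he.reachable hc hu hw) h

theorem ClosedEnd.of_reachable (hu : c.ClosedEnd u) (hc : c.Optimal) (hl : G.Loopless)
    (hq : c.Deficient q) (h : c.graph.Reachable u q) : c.ClosedEnd q := by
  obtain ⟨e, he, w, hends⟩ := hu
  refine ⟨e, he, hends ▸ Sym2.mem_iff.2 ?_⟩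
  exact he.eq_or_eq_of_reachable hc hl hends hq h

/-- The vertex `m` misses no colour, and no uncoloured edge joins it to a deficient vertex other
than a closed end. -/
def Inner (c : G.Coloring) (m : G.V) : Prop :=
  ¬ c.Deficient m ∧ ∀ q, c.UncoloredAdj m q → c.Deficient q → c.ClosedEnd q

/-- The vertex `m` lies on the coloured path with end `u`, or an uncoloured edge joins it to an end
of this path. -/
def Attached (c : G.Coloring) (u m : G.V) : Prop :=
  c.graph.Reachable u m ∨ ∃ q, c.UncoloredAdj m q ∧ c.Deficient q ∧ c.graph.Reachable u q

theorem ClosedEnd.inner_of_attached (hu : c.ClosedEnd u) (hc : c.Optimal) (hl : G.Loopless)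
    (hdeg : G.deg m = 3) (hm : ¬ c.Deficient m) (h : c.Attached u m) : c.Inner m := by
  refine ⟨hm, fun q hmq hq ↦ hu.of_reachable hc hl hq ?_⟩
  obtain h | ⟨q', hmq', -, h⟩ := h
  · obtain ⟨e, he, hue⟩ := hu
    obtain ⟨g, hg, hends⟩ := hmq
    exact he.reachable_of_deficient hc hue h hg hends hq
  · exact hc.isProper.eq_of_uncoloredAdj hl hdeg hm hmq' hmq ▸ h

theorem IsClosing.exists_uncoloredAdj_of_triangle (he : c.IsClosing e) (hc : c.Optimal)
    (hl : G.Loopless) (hdeg : G.deg u = 3) (hends : G.ends e = s(u, w))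
    (hf : G.ends f = s(u, z)) (hfc : c f ≠ none) (hh : G.ends h = s(z, w)) :
    ∃ x, x ≠ z ∧ ¬ c.Deficient x ∧ c.UncoloredAdj x u := by
  have hu : c.Deficient u := he.2 u (hends ▸ Sym2.mem_mk_left u w)
  obtain ⟨g, hg, hge⟩ := exists_mem_ne (hc.isProper.two_le_card_uncoloredStar hl hu hdeg) e
  obtain ⟨⟨x, hgx⟩, hgc⟩ := mem_uncoloredStar.1 hg
  refine ⟨x, ?_, fun hx ↦ ?_, g, hgc, hgx.trans Sym2.eq_swap⟩
  · rintro rfl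
    refine hc.not_fat hgc ⟨⟨f, ?_, hf.trans hgx.symm⟩, w, ?_⟩
    · rintro rfl
      exact hfc hgc
    · simp only [hgx, Sym2.mem_iff, forall_eq_or_imp, forall_eq]
      exact ⟨⟨e, hends⟩, h, hh⟩
  · have hxw : x = w := (he.eq_or_eq_of_reachable hc hl hends hx
      (hc.reachable_of_deficient hgc hgx hu hx)).resolve_left (hl.ne_of_ends_eq hgx).symm
    refine hc.not_fat he.1 ⟨⟨g, hge, by rw [hgx, hends, hxw]⟩, z, ?_⟩
    simp only [hends, Sym2.mem_iff, forall_eq_or_imp, forall_eq]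
    exact ⟨⟨f, hf⟩, h, hh.trans Sym2.eq_swap⟩

open Classical in
theorem IsClosing.two_lt_card_attached_of_triangle (he : c.IsClosing e) (hc : c.Optimal)
    (hl : G.Loopless) (hdeg : ∀ v, G.deg v = 3) (hends : G.ends e = s(u, w))
    (hf : G.ends f = s(u, z)) (hfc : c f ≠ none) (hh : G.ends h = s(z, w)) (hhc : c h ≠ none)
    (hz : ¬ c.Deficient z) : 2 < #{m | ¬ c.Deficient m ∧ c.Attached u m} := by
  have hue : u ∈ G.ends e := hends ▸ Sym2.mem_mk_left u w
  have hwe : w ∈ G.ends e := hends ▸ Sym2.mem_mk_right u w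
  obtain ⟨x, hxz, hx, hxu⟩ := he.exists_uncoloredAdj_of_triangle hc hl (hdeg u) hends hf hfc hh
  obtain ⟨y, hyz, hy, hyw⟩ := he.exists_uncoloredAdj_of_triangle hc hl (hdeg w)
    (hends.trans Sym2.eq_swap) (hh.trans Sym2.eq_swap) hhc (hf.trans Sym2.eq_swap)
  have hxy : x ≠ y := by
    rintro rfl
    exact hl.ne_of_ends_eq hends (hc.isProper.eq_of_uncoloredAdj hl (hdeg x) hx hxu hyw)
  refine two_lt_card.2 ⟨x, ?_, y, ?_, z, ?_, hxy, hxz, hyz⟩ <;> rw [mem_filter_univ]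
  · exact ⟨hx, .inr ⟨u, hxu, he.2 u hue, .rfl⟩⟩
  · exact ⟨hy, .inr ⟨w, hyw, he.2 w hwe, he.reachable hc hue hwe⟩⟩
  · exact ⟨hz, .inl <| reachable_of_mem hfc (hf ▸ Sym2.mem_mk_left u z)
      (hf ▸ Sym2.mem_mk_right u z)⟩

theorem exists_of_not_misses (hl : G.Loopless) (hv : ¬ c.Misses v a) :
    ∃ e w, G.ends e = s(v, w) ∧ c e = some a ∧ v ≠ w ∧ c.graph.Reachable v w := by
  obtain ⟨e, ⟨w, he⟩, hea⟩ := not_misses.1 hv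
  exact ⟨e, w, he, hea, hl.ne_of_ends_eq he, reachable_of_mem (by simp [hea])
    (he ▸ Sym2.mem_mk_left v w) (he ▸ Sym2.mem_mk_right v w)⟩

open Classical in
theorem IsClosing.two_lt_card_attached_of_not_deficient (he : c.IsClosing e) (hc : c.Optimal)
    (hl : G.Loopless) (hends : G.ends e = s(u, w)) (hw : c.Misses w a)
    (hf : G.ends f = s(u, x)) (hfa : c f = some a) (hx : ¬ c.Deficient x)
    (hux : c.graph.Reachable u x) (hy : ¬ c.Deficient y) (huy : c.graph.Reachable u y)
    (hxy : x ≠ y) : 2 < #{m | ¬ c.Deficient m ∧ c.Attached u m} := by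
  obtain ⟨k, z, hk, hka, hyz, hryz⟩ := exists_of_not_misses hl fun hya ↦ hy ⟨a, hya⟩
  have hkz : z ∈ G.ends k := hk ▸ Sym2.mem_mk_right y z
  have huz : c.graph.Reachable u z := huy.trans hryz
  have hzf : z ∉ G.ends f := fun hzf ↦ by
    obtain rfl : k = f := hc.isProper hkz hzf hka hfa
    have hyf : y ∈ s(u, x) := hf ▸ hk ▸ Sym2.mem_mk_left y z
    obtain rfl : y = u := (Sym2.mem_iff.1 hyf).resolve_right hxy.symm
    exact hy (he.2 y (hends ▸ Sym2.mem_mk_left y w))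
  have hz : ¬ c.Deficient z := fun hz ↦ by
    obtain rfl | rfl := he.eq_or_eq_of_reachable hc hl hends hz huz
    · exact hzf (hf ▸ Sym2.mem_mk_left z x)
    · exact hw k hkz hka
  have hxz : x ≠ z := by
    rintro rfl
    exact hzf (hf ▸ Sym2.mem_mk_right u x)
  refine two_lt_card.2 ⟨x, ?_, y, ?_, z, ?_, hxy, hxz, hyz⟩ <;> rw [mem_filter_univ]
  exacts [⟨hx, .inl hux⟩, ⟨hy, .inl huy⟩, ⟨hz, .inl huz⟩]

open Classical in
theorem ClosedEnd.two_lt_card_attached (hu : c.ClosedEnd u) (hc : c.Optimal) (hl : G.Loopless)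
    (hdeg : ∀ v, G.deg v = 3) : 2 < #{m | ¬ c.Deficient m ∧ c.Attached u m} := by
  obtain ⟨e, he, w, hends⟩ := hu
  obtain ⟨a, hua⟩ := he.2 u (hends ▸ Sym2.mem_mk_left u w)
  have hwna : c.Misses w !a :=
    (he.2 w (hends ▸ Sym2.mem_mk_right u w)).misses_not (hc.not_misses he.1 hends hua)
  have hend {q} (hq : c.Deficient q) (h : c.graph.Reachable u q) : q = u ∨ q = w :=
    he.eq_or_eq_of_reachable hc hl hends hq h
  obtain ⟨f, x, hf, hfa, hux, hrux⟩ := exists_of_not_misses hl <|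
    hc.not_misses he.1 (hends.trans Sym2.eq_swap) hwna
  have hx : ¬ c.Deficient x := fun hx ↦ by
    obtain rfl : x = w := (hend hx hrux).resolve_left hux.symm
    exact hwna f (hf ▸ Sym2.mem_mk_right u x) hfa
  obtain ⟨h, y, hh, hha, hxy, hrxy⟩ := exists_of_not_misses hl fun hxa ↦ hx ⟨a, hxa⟩
  by_cases hy : c.Deficient y
  · have hyu : y ≠ u := by
      rintro rfl
      exact hua h (hh ▸ Sym2.mem_mk_right x y) hha
    obtain rfl : y = w := (hend hy (hrux.trans hrxy)).resolve_left hyu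
    exact he.two_lt_card_attached_of_triangle hc hl hdeg hends hf (by simp [hfa]) hh
      (by simp [hha]) hx
  · exact he.two_lt_card_attached_of_not_deficient hc hl hends hwna hf hfa hx hrux hy
      (hrux.trans hrxy) hxy

theorem ClosedEnd.reachable_of_attached (hu : c.ClosedEnd u) (hv : c.ClosedEnd v)
    (hc : c.Optimal) (hl : G.Loopless) (hdeg : G.deg m = 3) (hm : ¬ c.Deficient m)
    (hum : c.Attached u m) (hvm : c.Attached v m) : c.graph.Reachable u v := by
  have hmixed {x y q} (hx : c.ClosedEnd x) (hxm : c.graph.Reachable x m)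
      (hmq : c.UncoloredAdj m q) (hq : c.Deficient q) (hyq : c.graph.Reachable y q) :
      c.graph.Reachable x y := by
    obtain ⟨e, he, hxe⟩ := hx
    obtain ⟨g, hg, hends⟩ := hmq
    exact (he.reachable_of_deficient hc hxe hxm hg hends hq).trans hyq.symm
  obtain hum | ⟨q, hmq, hq, huq⟩ := hum <;> obtain hvm | ⟨r, hmr, hr, hvr⟩ := hvm
  · exact hum.trans hvm.symm
  · exact hmixed hu hum hmr hr hvr
  · exact (hmixed hv hvm hmq hq huq).symm
  · obtain rfl := hc.isProper.eq_of_uncoloredAdj hl hdeg hm hmq hmr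
    exact huq.trans hvr.symm

open Classical in
theorem Optimal.three_mul_card_closedEnd_le (hc : c.Optimal) (hl : G.Loopless)
    (hdeg : ∀ v, G.deg v = 3) : 3 * #{v | c.ClosedEnd v} ≤ 2 * #{m | c.Inner m} := by
  have hcount := card_mul_le_card_mul (s := {v | c.ClosedEnd v}) (t := {m | c.Inner m})
    c.Attached (m := 3) (n := 2) (fun u hu ↦ ?_) (fun m hm ↦ ?_)
  · lia
  · rw [mem_filter_univ] at hu
    refine (hu.two_lt_card_attached hc hl hdeg).trans_le (card_le_card fun m hm ↦ ?_)
    obtain ⟨hm, hum⟩ := (mem_filter_univ m).1 hm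
    simpa [hum] using hu.inner_of_attached hc hl (hdeg m) hm hum
  · rw [mem_filter_univ] at hm
    by_contra! hcard
    obtain ⟨x, hx, y, hy, z, hz, hxy, hxz, hyz⟩ := two_lt_card.1 hcard
    simp only [mem_bipartiteBelow, mem_filter_univ] at hx hy hz
    have hreach {v} (hv : c.ClosedEnd v ∧ c.Attached v m) : c.graph.Reachable x v :=
      hx.1.reachable_of_attached hv.1 hc hl (hdeg m) hm.1 hx.2 hv.2
    obtain rfl | rfl := hc.isProper.eq_or_eq_of_reachable hx.1.deficient hy.1.deficient
      hz.1.deficient hxy (hreach hy) (hreach hz)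
    · exact hxz rfl
    · exact hyz rfl

end OddCycle

section Counting

variable {G : Multigraph} {c : G.Coloring}

open Classical in
theorem Optimal.card_satellites_add_card_inner_le (hc : c.Optimal) (hl : G.Loopless)
    (hdeg : ∀ v, G.deg v = 3) :
    #(c.satellites {v | c.Isolated v}) + #(c.satellites {v | c.OpenEnd v}) + #{m | c.Inner m} ≤
      #{v | ¬ c.Deficient v} := by
  have hdisj : Disjoint (c.satellites {v | c.Isolated v}) (c.satellites {v | c.OpenEnd v}) :=
    hc.isProper.disjoint_satellites hl hdeg <| disjoint_filter.2 fun v _ hv hv' ↦ hv'.2.1 hv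
  have hinner : Disjoint
      (c.satellites {v | c.Isolated v} ∪ c.satellites {v | c.OpenEnd v})
      ({m | c.Inner m} : Finset G.V) := by
    refine disjoint_left.2 fun m hm hminner ↦ ?_
    rw [mem_filter_univ] at hminner
    simp only [mem_union, mem_satellites, mem_filter_univ] at hm
    obtain ⟨-, v, hv, hvm⟩ | ⟨-, v, hv, hvm⟩ := hm
    · exact (hminner.2 v hvm.symm hv.deficient).not_isolated hc hv
    · exact hv.2.2 (hminner.2 v hvm.symm hv.1)
  rw [← card_union_of_disjoint hdisj, ← card_union_of_disjoint hinner]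
  refine card_le_card fun m hm ↦ ?_
  simp only [mem_union, mem_satellites, mem_filter_univ] at hm ⊢
  obtain (⟨hm, -⟩ | ⟨hm, -⟩) | hm := hm
  exacts [hm, hm, hm.1]

open Classical in
theorem card_deficient_le (c : G.Coloring) :
    #{v | c.Deficient v} ≤ #{v | c.Isolated v} + #{v | c.OpenEnd v} + #{v | c.ClosedEnd v} := by
  refine (card_le_card fun v hv ↦ ?_).trans <| (card_union_le _ _).trans <|
    Nat.add_le_add_right (card_union_le _ _) _
  simp only [mem_union, mem_filter_univ] at hv ⊢
  by_cases hiso : c.Isolated v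
  · exact .inl (.inl hiso)
  by_cases hclosed : c.ClosedEnd v
  · exact .inr hclosed
  · exact .inl (.inr ⟨hv, hiso, hclosed⟩)

open Classical in
theorem IsProper.card_not_isolated_add_card_not_deficient_le (hp : c.IsProper) (hl : G.Loopless) :
    #{v | ¬ c.Isolated v} + #{v | ¬ c.Deficient v} ≤ 2 * #c.support := by
  rw [← sum_card_coloredStar hl c, card_filter, card_filter, ← sum_add_distrib]
  refine sum_le_sum fun v _ ↦ ?_
  have hdef := hp.deficient_iff (v := v)
  by_cases hv : c.Isolated v
  · simp [hv, hv.deficient]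
  · have : 0 < #(c.coloredStar v) := by
      refine card_pos.2 ?_
      obtain ⟨a, ha⟩ := not_forall.1 hv
      obtain ⟨e, hve, hea⟩ := not_misses.1 ha
      exact ⟨e, mem_coloredStar.2 ⟨hve, by simp [hea]⟩⟩
    grind

theorem Extremal.four_mul_card_le (hc : c.Extremal) (hl : G.Loopless)
    (hdeg : ∀ v, G.deg v = 3) : 4 * Fintype.card G.V ≤ 5 * #c.support := by
  classical
  have hp := hc.1.isProper
  have hisolated := hc.1.three_mul_card_isolated_le hl hdeg
  have hopen := hp.two_mul_card_openEnd_le hl hdeg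
  have hclosed := hc.1.three_mul_card_closedEnd_le hl hdeg
  have hisolated_open := hc.two_mul_card_isolated_le hl hdeg
  have hnotdef := hc.1.card_satellites_add_card_inner_le hl hdeg
  have hdef := c.card_deficient_le
  have hsupport := hp.card_not_isolated_add_card_not_deficient_le hl
  have hcard := card_filter_add_card_filter_not (s := univ) c.Deficient
  have hcard' := card_filter_add_card_filter_not (s := univ) c.Isolated
  rw [card_univ] at hcard hcard'
  lia

end Counting

end Coloring

/-- Every cubic graph G satisfies ν₂(G) ≥ (4/5)·|V(G)|. -/
theorem cubic_nu2_ge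
    (G : Multigraph) (hloopless : G.Loopless) (hcubic : ∀ v : G.V, G.deg v = 3) :
    5 * G.nu2 ≥ 4 * Fintype.card G.V := by
  obtain ⟨c, hc⟩ := Coloring.exists_extremal hloopless fun v ↦ (hcubic v).le
  calc 4 * Fintype.card G.V ≤ 5 * #c.support := hc.four_mul_card_le hloopless hcubic
    _ ≤ 5 * G.nu2 := Nat.mul_le_mul_left 5 (hc.1.isProper.card_support_le_nu2 hloopless)

end Multigraph
end
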